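/- arXiv:1312.5401 — 2 statements merged into one kernel-verified Lean document; each statement's English description precedes it below -/
import Mathlib

section
/- Let M be a 3-connected matroid with |E(M)| >= 4, and let (e_1, ..., e_n) be a fan of M. If there is an element e ∈ E(M) − {e_1, ..., e_n} and elements x, y, z ∈ {e_1, ..., e_n} such that {e, x, y} is a triangle and {e, y, z} is a triad, then M is a wheel or a whirl. -/
/-!
Let `F` be the set of the fan, of size `n`. Counting along the overlapping triangles and triads
gives `r(F) + r✶(F) ≤ n + 2`. The triangle and the triad through `e` put `e` into the closure and
the coclosure of `F`, so `F ∪ {e}` satisfies `r + r✶ ≤ |F ∪ {e}| + 1`, and 3-connectivity leaves at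
most one element outside `F ∪ {e}` (`NFan.compl_le_one`).

Up to duality the fan starts with a triad. By orthogonality the triangle `{e, x, y}` can only use
the two elements at an end of the fan, up to a reordering of a fan with at most four elements, so
`F ∪ {e}` is again the set of a fan (`NFan.extend`). Hence `M` has a fan missing exactly one
element: `F` if `F ∪ {e}` is the whole ground set, and `F ∪ {e}` otherwise. Such a fan cannot have
even length, as then the rank and the corank would be too small (`NFan.not_even`). If it has odd
length, the rank and the corank are determined, and comparing them with the ranks of subfans shows
that the missing element completes the fan to a cyclic one (`NFan.cycFan_of_odd`).

Finally, orthogonality with the triads of a cyclic fan determines all circuits which do not contain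
the whole rim: they consist of two spokes and an arc of the rim between them. Depending on whether
the rim is dependent or independent, `M` is a wheel or a whirl (`CycFan.wheel_or_whirl`).
-/

open Matroid Set

universe u

variable {α : Type u}

namespace PaperDefs

/-- Deletion of a set of elements from a matroid. -/
def mdel (M : Matroid α) (D : Set α) : Matroid α := M ↾ (M.E \ D)

/-- Contraction of a set of elements in a matroid. -/
def mcon (M : Matroid α) (C : Set α) : Matroid α := (mdel M✶ C)✶

/-- A circuit: a minimal dependent set. -/
def IsCircuit (M : Matroid α) (C : Set α) : Prop :=
  M.Dep C ∧ ∀ X, X ⊂ C → M.Indep X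

/-- A triangle: a 3-element circuit. -/
def IsTriangle (M : Matroid α) (T : Set α) : Prop :=
  IsCircuit M T ∧ T.encard = 3

/-- A triad: a 3-element cocircuit. -/
def IsTriad (M : Matroid α) (T : Set α) : Prop := IsTriangle M✶ T

/-- The (extended natural number) rank of a set in a matroid: the supremum of the
cardinalities of its independent subsets. -/
noncomputable def erk (M : Matroid α) (X : Set α) : ℕ∞ :=
  ⨆ I ∈ {I : Set α | M.Indep I ∧ I ⊆ X}, I.encard

/-- Two elements are connected if they are equal or lie in a common circuit. -/
def ConnTo (M : Matroid α) (e f : α) : Prop :=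
  (e = f ∧ e ∈ M.E) ∨ ∃ C, IsCircuit M C ∧ e ∈ C ∧ f ∈ C

/-- A matroid is connected if its ground set is nonempty and every two of its elements
are connected. -/
def Conn (M : Matroid α) : Prop :=
  M.E.Nonempty ∧ ∀ e ∈ M.E, ∀ f ∈ M.E, ConnTo M e f

/-- A 2-separation of a matroid: a partition `(X, Y)` of the ground set with both sides
of size at least two and `r(X) + r(Y) - r(M) ≤ 1`. -/
def TwoSep (M : Matroid α) (X Y : Set α) : Prop :=
  X ∪ Y = M.E ∧ Disjoint X Y ∧ 2 ≤ X.encard ∧ 2 ≤ Y.encard ∧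
    erk M X + erk M Y ≤ erk M M.E + 1

/-- A matroid is 3-connected if it is connected and has no 2-separation. -/
def ThreeConn (M : Matroid α) : Prop :=
  Conn M ∧ ∀ X Y, ¬ TwoSep M X Y

/-- A matroid is 3-connected up to series and parallel sets if it is connected and, for
every 2-separation `(X, Y)`, `min {r X, r Y} = 1` or `min {r✶ X, r✶ Y} = 1`. -/
def ThreeConnUpToSP (M : Matroid α) : Prop :=
  Conn M ∧ ∀ X Y, TwoSep M X Y →
    min (erk M X) (erk M Y) = 1 ∨ min (erk M✶ X) (erk M✶ Y) = 1

/-- `N` is a minor of `M`: it is obtained from `M` by contracting a set `C` and deleting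
a disjoint set `D`. -/
def IsMinor (N M : Matroid α) : Prop :=
  ∃ C D, C ⊆ M.E ∧ D ⊆ M.E ∧ Disjoint C D ∧ N = mdel (mcon M C) D

/-- `M` is isomorphic to `N`: there is a bijection between the ground sets under which
independence corresponds. -/
def IsoTo (M N : Matroid α) : Prop :=
  ∃ f : α → α, Set.BijOn f M.E N.E ∧ ∀ I, I ⊆ M.E → (M.Indep I ↔ N.Indep (f '' I))

/-- The cyclic interval `{i, i+1, ..., j-1}` in `ZMod r`. -/
def cycArc (r : ℕ) (i j : ZMod r) : Set (ZMod r) :=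
  {k | ∃ m : ℕ, m < (j - i).val ∧ k = i + (m : ZMod r)}

/-- `M` is (isomorphic to) a rank-`r` wheel for some `r ≥ 2`, i.e. the cycle matroid of
the wheel graph with `r` spokes: there is a labelling of the ground set by spokes `s i`
and rim elements `w i` so that the circuits of `M` are precisely the rim together with
the sets consisting of two spokes and the rim elements of one of the two arcs joining
them. -/
def IsWheel (M : Matroid α) : Prop :=
  ∃ r : ℕ, 2 ≤ r ∧ ∃ s w : ZMod r → α,
    Function.Injective (Sum.elim s w) ∧
    M.E = Set.range s ∪ Set.range w ∧
    ∀ C, IsCircuit M C ↔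
      (C = Set.range w ∨
        ∃ i j : ZMod r, i ≠ j ∧ C = {s i, s j} ∪ w '' cycArc r i j)

/-- `M` is (isomorphic to) a rank-`r` whirl for some `r ≥ 2`: obtained from the rank-`r`
wheel by relaxing the rim circuit; its circuits are the two-spokes-plus-arc circuits of
the wheel together with the sets consisting of the whole rim and a single spoke. -/
def IsWhirl (M : Matroid α) : Prop :=
  ∃ r : ℕ, 2 ≤ r ∧ ∃ s w : ZMod r → α,
    Function.Injective (Sum.elim s w) ∧
    M.E = Set.range s ∪ Set.range w ∧
    ∀ C, IsCircuit M C ↔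
      ((∃ i : ZMod r, C = insert (s i) (Set.range w)) ∨
        ∃ i j : ZMod r, i ≠ j ∧ C = {s i, s j} ∪ w '' cycArc r i j)

/-- A triangle if `b = true`, a triad if `b = false`. -/
def TriOrTriad (M : Matroid α) (b : Bool) (T : Set α) : Prop :=
  cond b (IsTriangle M T) (IsTriad M T)

/-- The alternation pattern of a fan, recorded as a list: position `i` (zero-based)
carries a spoke element iff `fanBool b i = true`, where `b` records whether the first
triple of the fan is a triangle. -/
def fanBool (b : Bool) (i : ℕ) : Bool := if i % 2 = 0 then b else !b

/-- `F` is a fan of `M` whose first triple is a triangle if `b = true` (so that the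
first element is a spoke element) and a triad if `b = false`: a list of at least three
distinct elements of the ground set in which every three consecutive elements form
alternately triangles and triads. -/
def IsFanWith (M : Matroid α) (b : Bool) (F : List α) : Prop :=
  3 ≤ F.length ∧ F.Nodup ∧ (∀ x ∈ F, x ∈ M.E) ∧
  ∀ (l₁ : List α) (x y z : α) (l₂ : List α), F = l₁ ++ x :: y :: z :: l₂ →
    TriOrTriad M (fanBool b l₁.length) {x, y, z}

/-- `F` is a fan of `M`. -/
def IsFan (M : Matroid α) (F : List α) : Prop := ∃ b, IsFanWith M b F

/-- `F` is consistent with `F'`: `F` is a (not necessarily contiguous) subsequence of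
`F'` or of its reversal. -/
def Consistent (F F' : List α) : Prop := F.Sublist F' ∨ F.Sublist F'.reverse

/-- A finite family of lists is pairwise disjoint. -/
def PairwiseDisjointLists (𝓕 : Finset (List α)) : Prop :=
  ∀ F ∈ 𝓕, ∀ G ∈ 𝓕, F ≠ G → ∀ x ∈ F, x ∉ G

/-- `𝓕` is a covering family of `M'` relative to `N` and `FN`: a family of pairwise
disjoint fans of `M'`, of the same size as `FN`, such that every fan of `FN` is
consistent with a member of `𝓕` and every element of `E(M') - E(N)` lies in a member
of `𝓕`. -/
def CoveringFamily (N : Matroid α) (FN : Finset (List α)) (M' : Matroid α)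
    (𝓕 : Finset (List α)) : Prop :=
  (∀ F ∈ 𝓕, IsFan M' F) ∧ PairwiseDisjointLists 𝓕 ∧ 𝓕.card = FN.card ∧
  (∀ F ∈ FN, ∃ F' ∈ 𝓕, Consistent F F') ∧
  (∀ x ∈ M'.E \ N.E, ∃ F ∈ 𝓕, x ∈ F)

/-- `M` is obtained from `M'` by a fan-lengthening move on the fan `F₀` of `M'`,
producing the fan `F` of `M`: either `M' = M \ e₁` where `e₁` is a terminal spoke
element of `F`, or `M' = M / e₁` where `e₁` is a terminal rim element of `F`, or
(when `F` has at least five elements) `M' = M / eᵢ \ eᵢ₊₁` for a rim element `eᵢ`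
of `F` with `1 ≤ i ≤ n - 1`; in each case `M` and `M'` are 3-connected and `F₀` is
the corresponding shortened fan. -/
def FanLengthen (M' M : Matroid α) (F₀ F : List α) : Prop :=
  ThreeConn M ∧ 4 ≤ F.length ∧ IsFan M' F₀ ∧
  ∃ b, IsFanWith M b F ∧
    ((∃ e F', F = e :: F' ∧ b = true ∧ M' = mdel M {e} ∧ ThreeConn M' ∧ F₀ = F') ∨
     (∃ e F', F = e :: F' ∧ b = false ∧ M' = mcon M {e} ∧ ThreeConn M' ∧ F₀ = F') ∨
     (5 ≤ F.length ∧ ∃ (l₁ : List α) (x y : α) (l₂ : List α),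
        F = l₁ ++ x :: y :: l₂ ∧ fanBool b l₁.length = false ∧
        M' = mdel (mcon M {x}) {y} ∧ ThreeConn M' ∧ F₀ = l₁ ++ l₂))

/-- The fan-extensions of `N` relative to the family `FN` of fans of `N`: the smallest
collection of matroids containing `N` and closed under fan-lengthening moves performed
on fans belonging to covering families. -/
inductive FanExt (N : Matroid α) (FN : Finset (List α)) : Matroid α → Prop
  | base : FanExt N FN N
  | step (M' M : Matroid α) (𝓕 : Finset (List α)) (F₀ F : List α) :
      FanExt N FN M' → CoveringFamily N FN M' 𝓕 → F₀ ∈ 𝓕 →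
      FanLengthen M' M F₀ F → FanExt N FN M

/-- The covering family `𝓕` of `M` admits a fan-shortening move: there are a matroid
`M'` having `N` as a minor and a fan `F₀` of `M'` such that `M` is obtained from `M'`
by a fan-lengthening move on `F₀` producing a fan that belongs to `𝓕`. -/
def AdmitsFanShortening (N M : Matroid α) (𝓕 : Finset (List α)) : Prop :=
  ∃ (M' : Matroid α) (F₀ F : List α), IsMinor N M' ∧ F ∈ 𝓕 ∧ FanLengthen M' M F₀ F

/-- The alternation pattern of a fan presented as a function with one-based indices:
position `i` carries a spoke element iff `posBool b i = true`, where `b` records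
whether the first triple of the fan is a triangle. -/
def posBool (b : Bool) (i : ℕ) : Bool := if i % 2 = 1 then b else !b

/-- `(e 1, ..., e n)` is a fan of `M` whose first triple is a triangle if `b = true`
(so that `e 1` is a spoke element) and a triad if `b = false`: at least three distinct
elements of the ground set in which every three consecutive elements form alternately
triangles and triads. -/
def IsFanFun (M : Matroid α) (b : Bool) (n : ℕ) (e : ℕ → α) : Prop :=
  3 ≤ n ∧ (∀ i j, 1 ≤ i → i ≤ n → 1 ≤ j → j ≤ n → e i = e j → i = j) ∧
  (∀ i, 1 ≤ i → i ≤ n → e i ∈ M.E) ∧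
  ∀ i, 1 ≤ i → i + 2 ≤ n → TriOrTriad M (posBool b i) {e i, e (i+1), e (i+2)}

/-- The set of elements of the fan `(e 1, ..., e n)`. -/
def fanSet (n : ℕ) (e : ℕ → α) : Set α := {a | ∃ i, 1 ≤ i ∧ i ≤ n ∧ a = e i}

/-- The set of rim elements of the fan `(e 1, ..., e n)` with alternation pattern `b`. -/
def rimSet (b : Bool) (n : ℕ) (e : ℕ → α) : Set α :=
  {a | ∃ i, 1 ≤ i ∧ i ≤ n ∧ posBool b i = false ∧ a = e i}

/-- `M` is representable over the field `𝔽`. -/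
def RepOver (M : Matroid α) (𝔽 : Type*) [Field 𝔽] : Prop :=
  ∃ f : α → (α → 𝔽),
    ∀ I : Set α, I ⊆ M.E → (M.Indep I ↔ LinearIndependent 𝔽 (fun x : I => f (x : α)))

/-- `M` has a minor isomorphic to a member of `𝓢`. -/
def HasSMinor (𝓢 : Set (Matroid α)) (M : Matroid α) : Prop :=
  ∃ S ∈ 𝓢, ∃ N, IsMinor N M ∧ IsoTo N S

/-- `M` is `𝓢`-fragile: for every element `e` of `M`, at least one of `M \ e` and
`M / e` has no `𝓢`-minor. -/
def SFragile (𝓢 : Set (Matroid α)) (M : Matroid α) : Prop :=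
  ∀ e ∈ M.E, ¬ HasSMinor 𝓢 (mdel M {e}) ∨ ¬ HasSMinor 𝓢 (mcon M {e})

end PaperDefs

open PaperDefs

namespace FanProof

variable {M : Matroid α}

/-! ### Three-connectivity through rank and corank -/

/-- `M` has at least four elements and no 2-separation with a finite side. The separation is
measured on the side `X` alone by `r(X) + r✶(X) - |X|`, which equals `r(X) + r(E - X) - r(M)`; in
this form the condition is visibly self-dual. -/
structure NoTwoSep (M : Matroid α) : Prop where
  four : 4 ≤ M.E.encard
  conn : ∀ X ⊆ M.E, X.Finite → 2 ≤ X.encard →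
    M.eRk X + M✶.eRk X ≤ X.encard + 1 → (M.E \ X).encard ≤ 1

lemma NoTwoSep.dual (h : NoTwoSep M) : NoTwoSep M✶ where
  four := h.four
  conn X hX hf h2 hr := h.conn X hX hf h2 (by rwa [dual_dual, add_comm] at hr)

lemma erk_eq (M : Matroid α) (X : Set α) : erk M X = M.eRk X := by
  apply le_antisymm
  · unfold erk
    refine iSup₂_le fun I hI => hI.1.encard_le_eRk_of_subset hI.2
  · obtain ⟨I, hI⟩ := M.exists_isBasis' X
    rw [← hI.encard_eq_eRk]
    unfold erk
    exact le_iSup₂_of_le (f := fun (I : Set α) (_ : I ∈ {I : Set α | M.Indep I ∧ I ⊆ X}) => I.encard)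
      I ⟨hI.indep, hI.subset⟩ le_rfl

lemma noTwoSep_of_threeConn (h : ThreeConn M) (h4 : 4 ≤ M.E.encard) : NoTwoSep M := by
  refine ⟨h4, fun X hXE hX h2 hr => ?_⟩
  by_contra hlt
  have h2' : 2 ≤ (M.E \ X).encard := by
    have := Order.add_one_le_of_lt (not_le.1 hlt)
    rwa [one_add_one_eq_two] at this
  refine h.2 X (M.E \ X) ⟨union_sdiff_cancel hXE, disjoint_sdiff_right, h2, h2', ?_⟩
  rw [erk_eq, erk_eq, erk_eq, eRk_ground]
  have hd := M.eRk_dual_add_eRank X hXE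
  rcases eq_or_ne M.eRank ⊤ with htop | hne
  · simp [htop]
  have hfin : X.encard ≠ ⊤ := encard_ne_top_iff.2 hX
  have h1 : M.eRk X ≠ ⊤ := ne_top_of_le_ne_top hne (M.eRk_le_eRank X)
  have h4 : M.eRk (M.E \ X) ≠ ⊤ := ne_top_of_le_ne_top hne (M.eRk_le_eRank _)
  have h3 : M✶.eRk X ≠ ⊤ := ne_top_of_le_ne_top hfin (M✶.eRk_le_encard X)
  generalize M.eRk X = a at *
  generalize M✶.eRk X = b at *
  generalize M.eRk (M.E \ X) = c at *
  generalize M.eRank = d at *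
  generalize X.encard = x at *
  lift a to ℕ using h1
  lift b to ℕ using h3
  lift c to ℕ using h4
  lift d to ℕ using hne
  lift x to ℕ using hfin
  norm_cast at *
  omega

/-- A parallel pair would be one side of a 2-separation, as the other side has at least two
elements. -/
lemma NoTwoSep.pair (h : NoTwoSep M) {a b : α} (ha : a ∈ M.E) (hb : b ∈ M.E) (hab : a ≠ b) :
    M.Indep {a, b} := by
  by_contra hn
  have hsub : ({a, b} : Set α) ⊆ M.E := by simp [insert_subset_iff, ha, hb]
  have hfin : ({a, b} : Set α).Finite := by simp
  have hd := eRk_lt_encard_of_dep_of_finite hfin (M := M) ⟨hn, hsub⟩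
  rw [encard_pair hab] at hd
  have hd1 : M.eRk {a, b} ≤ 1 := by
    rw [← one_add_one_eq_two] at hd
    exact Order.le_of_lt_add_one hd
  have hc := M✶.eRk_le_encard {a, b}
  have h1 := h.conn {a, b} hsub hfin (encard_pair hab).ge
    (by rw [add_comm]; exact add_le_add hc hd1)
  have := encard_sdiff_add_encard_of_subset hsub
  rw [encard_pair hab] at this
  have h4 := h.four
  rw [← this] at h4
  have : (4 : ℕ∞) ≤ 1 + 2 := h4.trans (by gcongr)
  norm_num at this

lemma NoTwoSep.isCircuit (h : NoTwoSep M) {a b c : α} (hd : M.Dep {a, b, c})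
    (hab : a ≠ b) (hac : a ≠ c) (hbc : b ≠ c) : M.IsCircuit {a, b, c} := by
  have hs := hd.subset_ground
  simp only [insert_subset_iff, singleton_subset_iff] at hs
  rw [isCircuit_iff_dep_forall_sdiff_singleton_indep]
  refine ⟨hd, ?_⟩
  rintro x (rfl | rfl | rfl)
  · exact (h.pair hs.2.1 hs.2.2 hbc).subset (by grind)
  · exact (h.pair hs.1 hs.2.2 hac).subset (by grind)
  · exact (h.pair hs.1 hs.2.1 hab).subset (by grind)

lemma NoTwoSep.mem_closure (h : NoTwoSep M) {a b c : α} (hd : M.Dep {a, b, c})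
    (hab : a ≠ b) (hac : a ≠ c) (hbc : b ≠ c) : c ∈ M.closure {a, b} := by
  have := (h.isCircuit hd hab hac hbc).mem_closure_sdiff_singleton_of_mem (e := c) (by simp)
  exact M.closure_subset_closure (by grind) this

/-- Orthogonality: a triangle and a triad do not meet in exactly one element. -/
lemma NoTwoSep.ortho (h : NoTwoSep M) {a b c p q r : α} (hd : M.Dep {a, b, c})
    (hd' : M✶.Dep {p, q, r}) (hab : a ≠ b) (hac : a ≠ c) (hbc : b ≠ c)
    (hpq : p ≠ q) (hpr : p ≠ r) (hqr : q ≠ r) (ha : a ∈ ({p, q, r} : Set α))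
    (hb : b ∉ ({p, q, r} : Set α)) (hc : c ∉ ({p, q, r} : Set α)) : False := by
  refine (h.isCircuit hd hab hac hbc).inter_isCocircuit_ne_singleton
    (h.dual.isCircuit hd' hpq hpr hqr) (e := a) ?_
  grind

/-- A chain of `k` dependent triples in which consecutive triples share an element has rank at most
`k + 1`: each new triple adds two elements, one of which is in the closure of the rest. -/
lemma NoTwoSep.chain (h : NoTwoSep M) (k : ℕ) (g : ℕ → α) (hg : InjOn g (Iic (2 * k)))
    (hd : ∀ i < k, M.Dep {g (2 * i), g (2 * i + 1), g (2 * i + 2)}) :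
    M.eRk (g '' Iic (2 * k)) ≤ k + 1 := by
  induction k with
  | zero =>
    have h0 : Iic (2 * 0) = ({0} : Set ℕ) := by ext; simp
    rw [h0, image_singleton]
    simp
  | succ k ih =>
    have ih' := ih (hg.mono (Iic_subset_Iic.2 (by omega))) (fun i hi => hd i (by omega))
    have hne : ∀ i j, i ≤ 2 * k + 2 → j ≤ 2 * k + 2 → i ≠ j → g i ≠ g j := fun i j hi hj hij he =>
      hij (hg (by simpa using by omega) (by simpa using by omega) he)
    have hcl := h.mem_closure (hd k (by omega)) (hne _ _ (by omega) (by omega) (by omega))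
      (hne _ _ (by omega) (by omega) (by omega)) (hne _ _ (by omega) (by omega) (by omega))
    have hsub : g '' Iic (2 * (k + 1)) ⊆ M.closure (insert (g (2 * k + 1)) (g '' Iic (2 * k))) ∪
        (insert (g (2 * k + 1)) (g '' Iic (2 * k))) := by
      rintro _ ⟨i, hi, rfl⟩
      have hi : i ≤ 2 * k + 2 := hi
      rcases Nat.lt_or_ge i (2 * k + 1) with h1 | h1
      · exact Or.inr (Or.inr ⟨i, by simpa using by omega, rfl⟩)
      rcases Nat.eq_or_lt_of_le h1 with h1 | h1
      · exact Or.inr (Or.inl (by rw [h1]))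
      · left
        obtain rfl : i = 2 * k + 2 := by omega
        refine M.closure_subset_closure ?_ hcl
        rw [insert_subset_iff, singleton_subset_iff]
        exact ⟨Or.inr ⟨2 * k, by simp, rfl⟩, Or.inl rfl⟩
    calc _ ≤ _ := M.eRk_mono hsub
      _ = M.eRk (insert (g (2 * k + 1)) (g '' Iic (2 * k))) := by
        rw [eRk_union_closure_left_eq, union_self]
      _ ≤ M.eRk (g '' Iic (2 * k)) + 1 := eRk_insert_le_add_one ..
      _ ≤ _ := by push_cast; gcongr

lemma encard_pair_le_two (a b : α) : ({a, b} : Set α).encard ≤ 2 := by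
  refine (encard_insert_le _ _).trans ?_
  rw [encard_singleton, one_add_one_eq_two]

/-! ### Cyclic fans are wheels and whirls -/

/-- The ground set of `M` is a fan closed up to a cycle `s 0, w 0, s 1, w 1, ...`, with spokes `s i`,
rim elements `w i`, triangles `{s i, w i, s (i + 1)}` and triads `{w i, s (i + 1), w (i + 1)}`.
Only dependence of the triples is recorded: in a matroid without 2-separations dependent triples of
distinct elements are circuits. -/
structure CycFan (M : Matroid α) (r : ℕ) (s w : ZMod r → α) : Prop where
  two_le : 2 ≤ r
  inj : Function.Injective (Sum.elim s w)
  ground : M.E = range s ∪ range w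
  tri : ∀ i, M.Dep {s i, w i, s (i + 1)}
  triad : ∀ i, M✶.Dep {w i, s (i + 1), w (i + 1)}

namespace CycFan

variable {r : ℕ} {s w : ZMod r → α}

lemma s_ne (h : CycFan M r s w) {i j : ZMod r} (hij : i ≠ j) : s i ≠ s j := fun he =>
  hij (Sum.inl_injective (h.inj (a₁ := Sum.inl i) (a₂ := Sum.inl j) he))

lemma w_ne (h : CycFan M r s w) {i j : ZMod r} (hij : i ≠ j) : w i ≠ w j := fun he =>
  hij (Sum.inr_injective (h.inj (a₁ := Sum.inr i) (a₂ := Sum.inr j) he))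

lemma sw_ne (h : CycFan M r s w) (i j : ZMod r) : s i ≠ w j := fun he =>
  Sum.inl_ne_inr (h.inj (a₁ := Sum.inl i) (a₂ := Sum.inr j) he)

lemma s_notMem (h : CycFan M r s w) (i : ZMod r) (A : Set (ZMod r)) : s i ∉ w '' A := by
  rintro ⟨j, -, hj⟩
  exact h.sw_ne i j hj.symm

lemma ne_add_one (h : CycFan M r s w) (i : ZMod r) : i ≠ i + 1 := by
  have := h.two_le
  have : Fact (1 < r) := ⟨by omega⟩
  simp

/-- Duality exchanges the rim with the spokes. -/
lemma dual (h : CycFan M r s w) : CycFan M✶ r w (fun i => s (i + 1)) where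
  two_le := h.two_le
  inj := by
    rintro (i | i) (j | j) hij
    · exact congrArg _ (by_contra fun hne => h.w_ne hne hij)
    · exact (h.sw_ne _ _ (Eq.symm hij)).elim
    · exact (h.sw_ne _ _ hij).elim
    · have : i + 1 = j + 1 := by_contra fun hne => h.s_ne hne hij
      rw [add_right_cancel this]
  ground := by
    have : range (fun i => s (i + 1)) = range s := by
      ext x
      constructor
      · rintro ⟨i, rfl⟩; exact ⟨_, rfl⟩
      · rintro ⟨i, rfl⟩; exact ⟨i - 1, by simp⟩
    rw [this, dual_ground, h.ground, union_comm]
  tri := h.triad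
  triad i := by rw [dual_dual]; exact h.tri (i + 1)

/-- A circuit meeting a triad of the cyclic fan contains a second element of that triad. -/
lemma triad_mem (h : CycFan M r s w) (hM : NoTwoSep M) {C : Set α} (hC : M.IsCircuit C)
    (i : ZMod r) {x : α} (hx : x ∈ C) (hx' : x ∈ ({w i, s (i + 1), w (i + 1)} : Set α)) :
    ∃ y ∈ C, y ∈ ({w i, s (i + 1), w (i + 1)} : Set α) ∧ y ≠ x := by
  have hK : M.IsCocircuit {w i, s (i + 1), w (i + 1)} :=
    hM.dual.isCircuit (h.triad i) (h.sw_ne _ _).symm (h.w_ne (h.ne_add_one i)) (h.sw_ne _ _)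
  obtain ⟨y, hy, hne⟩ := (hC.isCocircuit_inter_nontrivial hK ⟨x, hx, hx'⟩).exists_ne x
  exact ⟨y, hy.1, hy.2, hne⟩

/-- Starting from `s i`, the triangles put the successive spokes into the closure of `s i` and the
rim elements passed so far. -/
lemma arc_dep (h : CycFan M r s w) (hM : NoTwoSep M) {i j : ZMod r} (hij : i ≠ j) :
    M.Dep ({s i, s j} ∪ w '' cycArc r i j) := by
  have : NeZero r := ⟨by have := h.two_le; omega⟩
  have hsE : ∀ i, s i ∈ M.E := fun i => by rw [h.ground]; exact Or.inl ⟨i, rfl⟩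
  have hwE : ∀ i, w i ∈ M.E := fun i => by rw [h.ground]; exact Or.inr ⟨i, rfl⟩
  have key : ∀ m : ℕ, s (i + m) ∈ M.closure (insert (s i) (w '' {k | ∃ l < m, k = i + (l : ℕ)})) := by
    intro m
    induction m with
    | zero => exact M.mem_closure_of_mem' (by simp) (hsE _)
    | succ m ih =>
      have h1 : s (i + m + 1) ∈ M.closure {s (i + m), w (i + m)} :=
        hM.mem_closure (h.tri (i + m)) (h.sw_ne _ _) (h.s_ne (h.ne_add_one _)) (h.sw_ne _ _).symm
      rw [Nat.cast_add, Nat.cast_one, ← add_assoc]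
      refine M.closure_subset_closure_of_subset_closure ?_ h1
      rw [insert_subset_iff, singleton_subset_iff]
      constructor
      · refine M.closure_subset_closure ?_ ih
        refine insert_subset_insert (image_mono ?_)
        rintro k ⟨l, hl, rfl⟩
        exact ⟨l, by omega, rfl⟩
      · exact M.mem_closure_of_mem' (Or.inr ⟨_, ⟨m, by omega, rfl⟩, rfl⟩) (hwE _)
  have hk := key (j - i).val
  rw [ZMod.natCast_zmod_val, add_sub_cancel] at hk
  have hEsub : {s i, s j} ∪ w '' cycArc r i j ⊆ M.E := by
    rw [union_subset_iff, insert_subset_iff, singleton_subset_iff]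
    refine ⟨⟨hsE _, hsE _⟩, ?_⟩
    rintro _ ⟨k, -, rfl⟩
    exact hwE k
  refine ⟨fun hind => ?_, hEsub⟩
  refine hind.notMem_closure_sdiff_of_mem (e := s j) (by simp) (M.closure_subset_closure ?_ hk)
  rintro x (rfl | hx)
  · exact ⟨by simp, h.s_ne hij⟩
  · refine ⟨Or.inr hx, ?_⟩
    rintro rfl
    exact h.s_notMem _ _ hx

lemma self_notMem_arc [NeZero r] (i j : ZMod r) : j ∉ cycArc r i j := by
  rintro ⟨m, hm, hj⟩
  have h1 : j - i = (m : ZMod r) := by rw [hj]; ring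
  have hlt : m < r := hm.trans (ZMod.val_lt _)
  rw [h1, ZMod.val_natCast_of_lt hlt] at hm
  exact lt_irrefl _ hm

lemma self_mem_arc [NeZero r] {i j : ZMod r} (hij : i ≠ j) : i ∈ cycArc r i j := by
  refine ⟨0, ?_, by simp⟩
  rw [Nat.pos_iff_ne_zero, Ne, ZMod.val_eq_zero, sub_eq_zero]
  exact hij.symm

/-- A circuit not containing the whole rim contains a maximal rim arc. By orthogonality with the
triads at its two ends it contains the two bounding spokes as well, and by `arc_dep` nothing
else. -/
lemma circuit_type (h : CycFan M r s w) (hM : NoTwoSep M) {C : Set α} (hC : M.IsCircuit C) :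
    range w ⊆ C ∨ ∃ i j : ZMod r, i ≠ j ∧ C = {s i, s j} ∪ w '' cycArc r i j := by
  have hr := h.two_le
  have : NeZero r := ⟨by omega⟩
  by_cases hall : range w ⊆ C
  · exact Or.inl hall
  right
  obtain ⟨k0, hk0⟩ : ∃ k, w k ∉ C := by
    by_contra hcon
    push Not at hcon
    exact hall (by rintro _ ⟨k, rfl⟩; exact hcon k)
  obtain ⟨k1, hk1⟩ : ∃ k, w k ∈ C := by
    obtain ⟨x, hx⟩ := hC.nonempty
    have hxE := hC.subset_ground hx
    rw [h.ground] at hxE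
    rcases hxE with ⟨k, rfl⟩ | ⟨k, rfl⟩
    · obtain ⟨y, hyC, hy, hne⟩ := h.triad_mem hM hC (k - 1) hx (by simp)
      rcases hy with rfl | rfl | rfl
      · exact ⟨_, hyC⟩
      · simp at hne
      · exact ⟨_, hyC⟩
    · exact ⟨k, hx⟩
  obtain ⟨i, hi', hi⟩ : ∃ i, w i ∉ C ∧ w (i + 1) ∈ C := by
    by_contra hcon
    push Not at hcon
    have : ∀ m : ℕ, w (k0 + m) ∉ C := by
      intro m
      induction m with
      | zero => simpa using hk0
      | succ m ih =>
        rw [Nat.cast_add, Nat.cast_one, ← add_assoc]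
        exact hcon _ ih
    refine this (k1 - k0).val ?_
    rwa [ZMod.natCast_zmod_val, add_sub_cancel]
  -- `m` is the length of the rim arc of `C` that starts at `w (i + 1)`
  have hex : ∃ m : ℕ, w (i + 1 + m) ∉ C := ⟨r - 1, by
    rw [Nat.cast_sub (by omega)]; simpa using hi'⟩
  classical
  obtain ⟨m, hm, hmin⟩ : ∃ m : ℕ, w (i + 1 + m) ∉ C ∧ ∀ l < m, w (i + 1 + (l : ℕ)) ∈ C :=
    ⟨Nat.find hex, Nat.find_spec hex, fun l hl => not_not.1 (Nat.find_min hex hl)⟩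
  have hmr : m < r := by
    by_contra hcon
    have := hmin (r - 1) (by omega)
    rw [Nat.cast_sub (by omega)] at this
    exact hi' (by simpa using this)
  have hm0 : m ≠ 0 := by
    rintro rfl
    simp at hm
    exact hm hi
  have hval : (i + 1 + m - (i + 1) : ZMod r).val = m := by
    rw [add_sub_cancel_left, ZMod.val_natCast_of_lt hmr]
  have hne : i + 1 ≠ i + 1 + m := by
    intro he
    rw [← he] at hm
    exact hm hi
  have hsi : s (i + 1) ∈ C := by
    obtain ⟨y, hyC, hy, hne⟩ := h.triad_mem hM hC i hi (by simp)
    rcases hy with rfl | rfl | rfl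
    · exact (hi' hyC).elim
    · exact hyC
    · simp at hne
  have hsj : s (i + 1 + m) ∈ C := by
    obtain ⟨l, rfl⟩ := Nat.exists_eq_succ_of_ne_zero hm0
    have hl := hmin l (by omega)
    rw [Nat.succ_eq_add_one, Nat.cast_add, Nat.cast_one, ← add_assoc] at *
    obtain ⟨y, hyC, hy, hne⟩ := h.triad_mem hM hC (i + 1 + l) hl (by simp)
    rcases hy with rfl | rfl | rfl
    · simp at hne
    · exact hyC
    · exact (hm hyC).elim
  refine ⟨i + 1, i + 1 + m, hne, (hC.eq_of_dep_subset (h.arc_dep hM hne) ?_).symm⟩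
  rintro x ((rfl | rfl) | ⟨_, ⟨l, hl, rfl⟩, rfl⟩)
  · exact hsi
  · exact hsj
  · rw [hval] at hl
    exact hmin l hl

lemma arc_circuit (h : CycFan M r s w) (hM : NoTwoSep M) {i j : ZMod r} (hij : i ≠ j) :
    M.IsCircuit ({s i, s j} ∪ w '' cycArc r i j) := by
  have hr := h.two_le
  have : NeZero r := ⟨by omega⟩
  have hwj : w j ∉ {s i, s j} ∪ w '' cycArc r i j := by
    rintro ((hw | hw) | ⟨k, hk, hw⟩)
    · exact h.sw_ne _ _ hw.symm
    · exact h.sw_ne _ _ hw.symm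
    · by_cases hkj : k = j
      · exact self_notMem_arc i j (hkj ▸ hk)
      · exact h.w_ne hkj hw
  have hmem : ∀ k, s k ∈ {s i, s j} ∪ w '' cycArc r i j → k = i ∨ k = j := by
    rintro k ((hs | hs) | hs)
    · exact Or.inl (by_contra fun hne => h.s_ne hne hs)
    · exact Or.inr (by_contra fun hne => h.s_ne hne hs)
    · exact (h.s_notMem _ _ hs).elim
  obtain ⟨C, hCD, hC⟩ := (h.arc_dep hM hij).exists_isCircuit_subset
  rcases h.circuit_type hM hC with hw | ⟨k, l, hkl, rfl⟩
  · exact (hwj (hCD (hw ⟨j, rfl⟩))).elim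
  · rcases hmem k (hCD (by simp)) with rfl | rfl <;> rcases hmem l (hCD (by simp)) with rfl | rfl
    · exact (hkl rfl).elim
    · exact hC
    · exact (hwj (hCD (Or.inr ⟨_, self_mem_arc hkl, rfl⟩))).elim
    · exact (hkl rfl).elim

lemma eRank_le (h : CycFan M r s w) (hM : NoTwoSep M) : M.eRank ≤ r := by
  have : NeZero r := ⟨by have := h.two_le; omega⟩
  have hsub : M.E ⊆ M.closure (range s) := by
    rw [h.ground]
    have hs : range s ⊆ M.E := by rw [h.ground]; exact subset_union_left
    refine union_subset (M.subset_closure _ hs) ?_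
    rintro _ ⟨i, rfl⟩
    have hd := h.tri i
    rw [pair_comm (w i)] at hd
    refine M.closure_subset_closure ?_ (hM.mem_closure hd (h.s_ne (h.ne_add_one _)) (h.sw_ne _ _)
      (h.sw_ne _ _))
    rw [insert_subset_iff, singleton_subset_iff]
    exact ⟨⟨_, rfl⟩, ⟨_, rfl⟩⟩
  calc M.eRank = M.eRk M.E := M.eRk_ground.symm
    _ ≤ M.eRk (M.closure (range s)) := M.eRk_mono hsub
    _ = M.eRk (range s) := M.eRk_closure_eq _
    _ ≤ (range s).encard := M.eRk_le_encard _
    _ ≤ r := by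
      rw [← image_univ]
      refine (encard_image_le _ _).trans ?_
      simp [ENat.card_eq_coe_fintype_card, ZMod.card]

lemma isCircuit_iff (C : Set α) : PaperDefs.IsCircuit M C ↔ M.IsCircuit C := by
  rw [isCircuit_iff_forall_ssubset]; rfl

/-- The circuits of a cyclic fan are known up to those containing the rim, so `M` is a whirl if the
rim is independent and a wheel if it is dependent. -/
lemma wheel_or_whirl (h : CycFan M r s w) (hM : NoTwoSep M) : IsWheel M ∨ IsWhirl M := by
  have hr := h.two_le
  have : NeZero r := ⟨by omega⟩
  have hwE : range w ⊆ M.E := by rw [h.ground]; exact subset_union_right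
  have hsw : ∀ i, s i ∉ range w := by
    rintro i ⟨j, hj⟩; exact h.sw_ne _ _ hj.symm
  by_cases hrim : M.Indep (range w)
  · right
    refine ⟨r, hr, s, w, h.inj, h.ground, fun C => ?_⟩
    rw [isCircuit_iff]
    have hdep : ∀ i, M.Dep (insert (s i) (range w)) := by
      intro i
      refine ⟨fun hind => ?_, insert_subset (by rw [h.ground]; exact Or.inl ⟨i, rfl⟩) hwE⟩
      have h1 := hind.encard_le_eRank.trans (h.eRank_le hM)
      rw [encard_insert_of_notMem (hsw i), ← image_univ, InjOn.encard_image] at h1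
      · simp [ENat.card_eq_coe_fintype_card, ZMod.card] at h1
        norm_cast at h1
        omega
      · intro i _ j _ hij
        exact by_contra fun hne => h.w_ne hne hij
    have hbig : ∀ C, M.IsCircuit C → range w ⊆ C → ∃ i, C = insert (s i) (range w) := by
      intro C hC hw
      have : ∃ x ∈ C, x ∉ range w := by
        by_contra hcon
        push Not at hcon
        exact hC.not_indep (hrim.subset hcon)
      obtain ⟨x, hx, hxw⟩ := this
      have hxE := hC.subset_ground hx
      rw [h.ground] at hxE
      rcases hxE with ⟨i, rfl⟩ | hxw'
      · exact ⟨i, (hC.eq_of_dep_subset (hdep i) (insert_subset hx hw)).symm⟩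
      · exact (hxw hxw').elim
    constructor
    · intro hC
      rcases h.circuit_type hM hC with hw | h2
      · exact Or.inl (hbig C hC hw)
      · exact Or.inr h2
    · rintro (⟨i, rfl⟩ | ⟨i, j, hij, rfl⟩)
      · obtain ⟨C, hCD, hC⟩ := (hdep i).exists_isCircuit_subset
        have hone : ∀ k, s k ∈ C → k = i := by
          intro k hk
          rcases hCD hk with hk | hk
          · exact by_contra fun hne => h.s_ne hne hk
          · exact (hsw _ hk).elim
        rcases h.circuit_type hM hC with hw | ⟨k, l, hkl, rfl⟩
        · obtain ⟨k, rfl⟩ := hbig C hC hw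
          obtain rfl := hone k (by simp)
          exact hC
        · exact (hkl ((hone k (by simp)).trans (hone l (by simp)).symm)).elim
      · exact h.arc_circuit hM hij
  · left
    refine ⟨r, hr, s, w, h.inj, h.ground, fun C => ?_⟩
    rw [isCircuit_iff]
    have hcirc : M.IsCircuit (range w) := by
      obtain ⟨C, hCD, hC⟩ := Dep.exists_isCircuit_subset (M := M) ⟨hrim, hwE⟩
      rcases h.circuit_type hM hC with hw | ⟨k, l, hkl, rfl⟩
      · rwa [hw.antisymm hCD]
      · exact (hsw k (hCD (by simp))).elim
    constructor
    · intro hC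
      rcases h.circuit_type hM hC with hw | h2
      · exact Or.inl (hC.eq_of_dep_subset hcirc.dep hw).symm
      · exact Or.inr h2
    · rintro (rfl | ⟨i, j, hij, rfl⟩)
      · exact hcirc
      · exact h.arc_circuit hM hij

end CycFan

/-! ### Fans that miss at most one element -/

/-- `g 0, ..., g (n - 1)` are distinct elements of `M` whose consecutive triples are alternately
codependent and dependent, starting with a codependent triple. Without 2-separations this is a fan
whose first triple is a triad; a fan whose first triple is a triangle is an `NFan` of the dual. -/
structure NFan (M : Matroid α) (n : ℕ) (g : ℕ → α) : Prop where
  inj : InjOn g (Iio n)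
  mem : ∀ i < n, g i ∈ M.E
  triad : ∀ i, i + 2 < n → i % 2 = 0 → M✶.Dep {g i, g (i + 1), g (i + 2)}
  tri : ∀ i, i + 2 < n → i % 2 = 1 → M.Dep {g i, g (i + 1), g (i + 2)}

/-- Pairs are coindependent, so removing two elements does not lower the rank. -/
lemma NoTwoSep.eRank_le (hM : NoTwoSep M) {a b : α} (ha : a ∈ M.E) (hb : b ∈ M.E) (hab : a ≠ b)
    {S : Set α} (hS : M.E ⊆ S ∪ {a, b}) : M.eRank ≤ M.eRk S := by
  have hc : M.Coindep {a, b} := hM.dual.pair ha hb hab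
  rw [← hc.compl_spanning.eRk_eq]
  refine M.eRk_mono ?_
  rintro x ⟨hx, hx'⟩
  exact (hS hx).resolve_right hx'

lemma dual_dep_of_eRk_lt {T S : Set α} (hT : T ⊆ M.E) (hS : M.E ⊆ S ∪ T)
    (hlt : M.eRk S < M.eRank) : M✶.Dep T := by
  refine ⟨fun hind => ?_, hT⟩
  have hc : M.Coindep T := hind
  rw [← hc.compl_spanning.eRk_eq] at hlt
  refine hlt.not_ge (M.eRk_mono ?_)
  rintro x ⟨hx, hx'⟩
  exact (hS hx).resolve_right hx'

lemma dep_of_eRk_dual_lt {T S : Set α} (hT : T ⊆ M.E) (hS : M.E ⊆ S ∪ T)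
    (hlt : M✶.eRk S < M✶.eRank) : M.Dep T := by
  have := dual_dep_of_eRk_lt (M := M✶) hT hS hlt
  rwa [dual_dual] at this

namespace NFan

variable {n : ℕ} {g : ℕ → α}

lemma ne (h : NFan M n g) {i j : ℕ} (hi : i < n) (hj : j < n) (hij : i ≠ j) : g i ≠ g j :=
  fun he => hij (h.inj hi hj he)

lemma eRk_dual_le (h : NFan M n g) (hM : NoTwoSep M) (a k : ℕ) (ha : a % 2 = 0)
    (hk : a + 2 * k < n) : M✶.eRk ((fun i => g (a + i)) '' Iic (2 * k)) ≤ k + 1 := by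
  refine hM.dual.chain k _ ?_ ?_
  · intro i hi j hj hij
    simp only [mem_Iic] at hi hj
    have := h.inj (x₁ := a + i) (x₂ := a + j) (by simpa using by omega) (by simpa using by omega) hij
    omega
  · intro i hi
    exact h.triad (a + 2 * i) (by omega) (by omega)

lemma eRk_le (h : NFan M n g) (hM : NoTwoSep M) (a k : ℕ) (ha : a % 2 = 1)
    (hk : a + 2 * k < n) : M.eRk ((fun i => g (a + i)) '' Iic (2 * k)) ≤ k + 1 := by
  refine hM.chain k _ ?_ ?_
  · intro i hi j hj hij
    simp only [mem_Iic] at hi hj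
    have := h.inj (x₁ := a + i) (x₂ := a + j) (by simpa using by omega) (by simpa using by omega) hij
    omega
  · intro i hi
    exact h.tri (a + 2 * i) (by omega) (by omega)

lemma mem_shift {g : ℕ → α} {a b i : ℕ} (h1 : a ≤ i) (h2 : i ≤ a + b) :
    g i ∈ (fun i => g (a + i)) '' Iic b :=
  ⟨i - a, by simpa using by omega, by simp [Nat.add_sub_cancel' h1]⟩

lemma encard_image (h : NFan M n g) : (g '' Iio n).encard = n := by
  rw [h.inj.encard_image, ← Finset.coe_Iio, encard_coe_eq_coe_finsetCard, Nat.card_Iio]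

/-- If a fan with an even number `2 * m` of elements misses a single element, then rank and corank
are both at most `m`, too small for `2 * m + 1` elements. -/
lemma not_even (h : NFan M n g) (hM : NoTwoSep M) {m : ℕ} (hn : n = 2 * m) (hm : 1 ≤ m) {f : α}
    (hf : f ∉ g '' Iio n) (hE : M.E = insert f (g '' Iio n)) : False := by
  have hfE : f ∈ M.E := by rw [hE]; exact mem_insert _ _
  have hne : ∀ i < n, f ≠ g i := fun i hi he => hf ⟨i, hi, he.symm⟩
  have h1 : M.eRank ≤ m := by
    refine (hM.eRank_le (S := (fun i => g (1 + i)) '' Iic (2 * (m - 1))) hfE (h.mem 0 (by omega))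
      (hne 0 (by omega)) ?_).trans ((h.eRk_le hM 1 (m - 1) rfl (by omega)).trans ?_)
    · rw [hE]
      rintro x (rfl | ⟨i, hi, rfl⟩)
      · simp
      · rcases Nat.eq_zero_or_pos i with rfl | hi0
        · simp
        · have hi : i < n := hi
          exact Or.inl (mem_shift hi0 (by omega))
    · norm_cast; omega
  have h2 : M✶.eRank ≤ m := by
    refine (hM.dual.eRank_le (S := (fun i => g (0 + i)) '' Iic (2 * (m - 1))) hfE
      (h.mem (2 * m - 1) (by omega)) (hne _ (by omega)) ?_).trans
      ((h.eRk_dual_le hM 0 (m - 1) rfl (by omega)).trans ?_)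
    · rw [dual_ground, hE]
      rintro x (rfl | ⟨i, hi, rfl⟩)
      · simp
      · have hi : i < n := hi
        by_cases hi0 : i = 2 * m - 1
        · subst hi0; simp
        · exact Or.inl (mem_shift (by omega) (by omega))
    · norm_cast; omega
  have h3 := M.eRank_add_eRank_dual
  rw [hE, encard_insert_of_notMem hf, h.encard_image, hn] at h3
  have h4 := add_le_add h1 h2
  rw [h3] at h4
  norm_cast at h4
  omega

/-- Both ranks are at most `m + 1`, and they add up to `|E| = 2 * m + 2`. -/
lemma odd_eRank (h : NFan M n g) (hM : NoTwoSep M) {m : ℕ} (hn : n = 2 * m + 1) (hm : 1 ≤ m)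
    {f : α} (hf : f ∉ g '' Iio n) (hE : M.E = insert f (g '' Iio n)) :
    (m : ℕ∞) < M.eRank ∧ (m : ℕ∞) < M✶.eRank := by
  have hfE : f ∈ M.E := by rw [hE]; exact mem_insert _ _
  have hne : ∀ i < n, f ≠ g i := fun i hi he => hf ⟨i, hi, he.symm⟩
  have h1 : M.eRank ≤ (m + 1 : ℕ) := by
    refine (hM.eRank_le (S := insert (g (2 * m)) ((fun i => g (1 + i)) '' Iic (2 * (m - 1)))) hfE
      (h.mem 0 (by omega)) (hne 0 (by omega)) ?_).trans ((M.eRk_insert_le_add_one _ _).trans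
      ((add_le_add_left (h.eRk_le hM 1 (m - 1) rfl (by omega)) 1).trans ?_))
    · rw [hE]
      rintro x (rfl | ⟨i, hi, rfl⟩)
      · simp
      · rcases Nat.eq_zero_or_pos i with rfl | hi0
        · simp
        · have hi : i < n := hi
          by_cases hi1 : i = 2 * m
          · subst hi1; simp
          · exact Or.inl (Or.inr (mem_shift hi0 (by omega)))
    · norm_cast; omega
  have h2 : M✶.eRank ≤ (m + 1 : ℕ) := by
    refine (hM.dual.eRank_le (S := (fun i => g (0 + i)) '' Iic (2 * m)) hfE
      (h.mem 0 (by omega)) (hne _ (by omega)) ?_).trans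
      ((h.eRk_dual_le hM 0 m rfl (by omega)).trans ?_)
    · rw [dual_ground, hE]
      rintro x (rfl | ⟨i, hi, rfl⟩)
      · simp
      · have hi : i < n := hi
        exact Or.inl (mem_shift (by omega) (by omega))
    · norm_cast
  have h3 := M.eRank_add_eRank_dual
  rw [hE, encard_insert_of_notMem hf, h.encard_image, hn] at h3
  have h1' : M.eRank ≠ ⊤ := ne_top_of_le_ne_top (ENat.natCast_ne_top _) h1
  have h2' : M✶.eRank ≠ ⊤ := ne_top_of_le_ne_top (ENat.natCast_ne_top _) h2
  generalize M.eRank = a at *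
  generalize M✶.eRank = b at *
  lift a to ℕ using h1'
  lift b to ℕ using h2'
  norm_cast at *
  omega

/-- If a fan with an odd number `2 * m + 1` of elements misses a single element `f`, then `f` closes
it up to a cyclic fan. The rank and the corank are `m + 1`, so the triangles of the fan off
`{g (2 * m), f, g 0}` span a set of rank at most `m`, whose complement is therefore codependent;
the triples `{f, g 0, g 1}` and `{g (2 * m - 1), g (2 * m), f}` are treated dually. The spokes and
the rim come out in the right order for the dual. -/
lemma cycFan_of_odd (h : NFan M n g) (hM : NoTwoSep M) {m : ℕ} (hn : n = 2 * m + 1) (hm : 1 ≤ m)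
    {f : α} (hf : f ∉ g '' Iio n) (hE : M.E = insert f (g '' Iio n)) :
    ∃ (r : ℕ) (s w : ZMod r → α), CycFan M r s w := by
  suffices hs : ∃ (r : ℕ) (s w : ZMod r → α), CycFan M✶ r s w by
    obtain ⟨r, s, w, hc⟩ := hs
    have := hc.dual
    rw [dual_dual] at this
    exact ⟨_, _, _, this⟩
  have hfE : f ∈ M.E := by rw [hE]; exact mem_insert _ _
  have hne : ∀ i < n, f ≠ g i := fun i hi he => hf ⟨i, hi, he.symm⟩
  obtain ⟨hr, hr'⟩ := h.odd_eRank hM hn hm hf hE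
  have hle : ((m - 1 : ℕ) : ℕ∞) + 1 ≤ m := by norm_cast; omega
  have t1 : M✶.Dep {g (2 * m), f, g 0} := by
    refine dual_dep_of_eRk_lt (S := (fun i => g (1 + i)) '' Iic (2 * (m - 1))) ?_ ?_
      (((h.eRk_le hM 1 (m - 1) rfl (by omega)).trans hle).trans_lt hr)
    · simp only [insert_subset_iff, singleton_subset_iff]
      exact ⟨h.mem _ (by omega), hfE, h.mem _ (by omega)⟩
    · rw [hE]
      rintro x (rfl | ⟨i, hi, rfl⟩)
      · simp
      · have hi : i < n := hi
        by_cases h0 : i = 0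
        · subst h0; simp
        by_cases h1 : i = 2 * m
        · subst h1; simp
        exact Or.inl (mem_shift (by omega) (by omega))
  have t2 : M.Dep {f, g 0, g 1} := by
    refine dep_of_eRk_dual_lt (S := (fun i => g (2 + i)) '' Iic (2 * (m - 1))) ?_ ?_
      (((h.eRk_dual_le hM 2 (m - 1) rfl (by omega)).trans hle).trans_lt hr')
    · simp only [insert_subset_iff, singleton_subset_iff]
      exact ⟨hfE, h.mem _ (by omega), h.mem _ (by omega)⟩
    · rw [hE]
      rintro x (rfl | ⟨i, hi, rfl⟩)
      · simp
      · have hi : i < n := hi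
        by_cases h0 : i = 0
        · subst h0; simp
        by_cases h1 : i = 1
        · subst h1; simp
        exact Or.inl (mem_shift (by omega) (by omega))
  have t3 : M.Dep {g (2 * m - 1), g (2 * m), f} := by
    refine dep_of_eRk_dual_lt (S := (fun i => g (0 + i)) '' Iic (2 * (m - 1))) ?_ ?_
      (((h.eRk_dual_le hM 0 (m - 1) rfl (by omega)).trans hle).trans_lt hr')
    · simp only [insert_subset_iff, singleton_subset_iff]
      exact ⟨h.mem _ (by omega), h.mem _ (by omega), hfE⟩
    · rw [hE]
      rintro x (rfl | ⟨i, hi, rfl⟩)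
      · simp
      · have hi : i < n := hi
        by_cases h0 : i = 2 * m - 1
        · subst h0; simp
        by_cases h1 : i = 2 * m
        · subst h1; simp
        exact Or.inl (mem_shift (by omega) (by omega))
  -- `G` is the fan with `f` appended in position `n = 2 * m + 1`
  obtain ⟨G, hGf, hGg⟩ : ∃ G : ℕ → α, G (2 * m + 1) = f ∧ ∀ i < 2 * m + 1, G i = g i :=
    ⟨Function.update g (2 * m + 1) f, by simp, fun i hi => by
      rw [Function.update_of_ne (by omega)]⟩
  have hGinj : ∀ i j, i ≤ 2 * m + 1 → j ≤ 2 * m + 1 → G i = G j → i = j := by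
    intro i j hi hj hij
    by_contra hne'
    rcases Nat.eq_or_lt_of_le hi with rfl | hi <;> rcases Nat.eq_or_lt_of_le hj with rfl | hj
    · exact hne' rfl
    · rw [hGf, hGg j hj] at hij
      exact hne j (by omega) hij
    · rw [hGf, hGg i hi] at hij
      exact hne i (by omega) hij.symm
    · rw [hGg i hi, hGg j hj] at hij
      exact h.ne (by omega) (by omega) hne' hij
  have hval : ∀ i : ZMod (m + 1), i.val < m + 1 := fun i => ZMod.val_lt i
  have hsucc : ∀ i : ZMod (m + 1), (i.val < m ∧ (i + 1).val = i.val + 1) ∨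
      (i.val = m ∧ (i + 1).val = 0) := by
    intro i
    have : Fact (1 < m + 1) := ⟨by omega⟩
    have h1 := ZMod.val_add i 1
    rw [ZMod.val_one] at h1
    rcases Nat.lt_or_ge i.val m with hi | hi
    · rw [Nat.mod_eq_of_lt (by omega)] at h1
      exact Or.inl ⟨hi, h1⟩
    · have hi' : i.val = m := by have := hval i; omega
      rw [hi', Nat.mod_self] at h1
      exact Or.inr ⟨hi', h1⟩
  refine ⟨m + 1, fun i => G (2 * i.val), fun i => G (2 * i.val + 1), by omega, ?_, ?_, ?_, ?_⟩
  · rintro (i | i) (j | j) hij <;> have hi := hval i <;> have hj := hval j <;>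
      have := hGinj _ _ (by omega) (by omega) hij
    · rw [ZMod.val_injective _ (by omega : i.val = j.val)]
    · omega
    · omega
    · rw [ZMod.val_injective _ (by omega : i.val = j.val)]
  · rw [dual_ground, hE]
    have hcast : ∀ k ≤ m, ((k : ℕ) : ZMod (m + 1)).val = k := fun k hk =>
      ZMod.val_natCast_of_lt (by omega)
    apply subset_antisymm
    · have hG : ∀ k ≤ 2 * m + 1, G k ∈ range (fun i : ZMod (m + 1) => G (2 * i.val)) ∪
          range (fun i : ZMod (m + 1) => G (2 * i.val + 1)) := by
        intro k hk
        rcases Nat.even_or_odd' k with ⟨c, rfl | rfl⟩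
        · exact Or.inl ⟨(c : ℕ), by simp only [hcast c (by omega)]⟩
        · exact Or.inr ⟨(c : ℕ), by simp only [hcast c (by omega)]⟩
      rintro x (rfl | ⟨i, hi, rfl⟩)
      · rw [← hGf]; exact hG _ le_rfl
      · have hi : i < n := hi
        rw [← hGg i (by omega)]; exact hG _ (by omega)
    · have hG : ∀ k ≤ 2 * m + 1, G k ∈ insert f (g '' Iio n) := by
        intro k hk
        rcases Nat.eq_or_lt_of_le hk with rfl | hk
        · rw [hGf]; simp
        · rw [hGg k hk]; exact Or.inr ⟨k, by simpa using by omega, rfl⟩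
      rintro x (⟨i, rfl⟩ | ⟨i, rfl⟩) <;> have := hval i <;> exact hG _ (by omega)
  · intro i
    rcases hsucc i with ⟨hi, hi'⟩ | ⟨hi, hi'⟩
    · simp only [hi']
      rw [hGg _ (by omega), hGg _ (by omega), hGg _ (by omega)]
      exact h.triad _ (by omega) (by omega)
    · simp only [hi', hi]
      rw [hGf, hGg _ (by omega), hGg _ (by omega)]
      exact t1
  · intro i
    rw [dual_dual]
    rcases hsucc i with ⟨hi, hi'⟩ | ⟨hi, hi'⟩
    · simp only [hi']
      rcases Nat.lt_or_ge (i.val + 1) m with hlt | hge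
      · rw [hGg _ (by omega), hGg _ (by omega), hGg _ (by omega)]
        exact h.tri _ (by omega) (by omega)
      · have e1 : 2 * i.val + 1 = 2 * m - 1 := by omega
        have e2 : 2 * (i.val + 1) = 2 * m := by omega
        rw [e1, e2, hGf, hGg _ (by omega), hGg _ (by omega)]
        exact t3
    · simp only [hi', hi]
      rw [hGf, hGg _ (by omega), hGg _ (by omega)]
      exact t2

/-! ### Extending a fan by an outside element -/

/-- The connectivity function of a fan is at most two. If an outside element `e` lies in both the
closure and the coclosure of the fan, adding `e` lowers it to one, which by 3-connectivity leaves
room for at most one further element. -/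
lemma compl_le_one (h : NFan M n g) (hM : NoTwoSep M) (hn : 3 ≤ n) {e : α}
    (heF : e ∉ g '' Iio n) (hcl : e ∈ M.closure (g '' Iio n))
    (hcl' : e ∈ M✶.closure (g '' Iio n)) : (M.E \ insert e (g '' Iio n)).encard ≤ 1 := by
  have hFE : g '' Iio n ⊆ M.E := by
    rintro _ ⟨i, hi, rfl⟩
    exact h.mem i hi
  have heE : e ∈ M.E := M.closure_subset_ground _ hcl
  have hcard : (insert e (g '' Iio n)).encard = n + 1 := by
    rw [encard_insert_of_notMem heF, h.encard_image]
  have hr1 : M.eRk (insert e (g '' Iio n)) ≤ M.eRk (g '' Iio n) := by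
    rw [← M.eRk_closure_eq (g '' Iio n)]
    exact M.eRk_mono (insert_subset hcl (M.subset_closure _ hFE))
  have hr2 : M✶.eRk (insert e (g '' Iio n)) ≤ M✶.eRk (g '' Iio n) := by
    rw [← M✶.eRk_closure_eq (g '' Iio n)]
    exact M✶.eRk_mono (insert_subset hcl' (M✶.subset_closure _ hFE))
  refine hM.conn _ (insert_subset heE hFE) (((finite_Iio n).image g).insert e) ?_ ?_
  · rw [hcard]; norm_cast; omega
  rw [hcard]
  refine (add_le_add hr1 hr2).trans ?_
  rcases Nat.even_or_odd' n with ⟨m, hm | hm⟩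
  · have k1 : M.eRk (g '' Iio n) ≤ (m + 1 : ℕ) := by
      refine (M.eRk_mono (b := insert (g 0) ((fun i => g (1 + i)) '' Iic (2 * (m - 1)))) ?_).trans
        ((M.eRk_insert_le_add_one _ _).trans
        ((add_le_add_left (h.eRk_le hM 1 (m - 1) rfl (by omega)) 1).trans ?_))
      · rintro _ ⟨i, hi, rfl⟩
        have hi : i < n := hi
        by_cases h0 : i = 0
        · subst h0; simp
        · exact Or.inr (mem_shift (by omega) (by omega))
      · norm_cast; omega
    have k2 : M✶.eRk (g '' Iio n) ≤ (m + 1 : ℕ) := by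
      refine (M✶.eRk_mono (b := insert (g (2 * m - 1))
        ((fun i => g (0 + i)) '' Iic (2 * (m - 1)))) ?_).trans
        ((M✶.eRk_insert_le_add_one _ _).trans
        ((add_le_add_left (h.eRk_dual_le hM 0 (m - 1) rfl (by omega)) 1).trans ?_))
      · rintro _ ⟨i, hi, rfl⟩
        have hi : i < n := hi
        by_cases h0 : i = 2 * m - 1
        · subst h0; simp
        · exact Or.inr (mem_shift (by omega) (by omega))
      · norm_cast; omega
    refine (add_le_add k1 k2).trans ?_
    norm_cast; omega
  · have k1 : M.eRk (g '' Iio n) ≤ (m + 2 : ℕ) := by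
      refine (M.eRk_mono (b := insert (g 0) (insert (g (2 * m))
        ((fun i => g (1 + i)) '' Iic (2 * (m - 1))))) ?_).trans
        ((M.eRk_insert_le_add_one _ _).trans
        ((add_le_add_left ((M.eRk_insert_le_add_one _ _).trans
        (add_le_add_left (h.eRk_le hM 1 (m - 1) rfl (by omega)) 1)) 1).trans ?_))
      · rintro _ ⟨i, hi, rfl⟩
        have hi : i < n := hi
        by_cases h0 : i = 0
        · subst h0; simp
        by_cases h1 : i = 2 * m
        · subst h1; simp
        · exact Or.inr (Or.inr (mem_shift (by omega) (by omega)))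
      · norm_cast; omega
    have k2 : M✶.eRk (g '' Iio n) ≤ (m + 1 : ℕ) := by
      refine (M✶.eRk_mono (b := (fun i => g (0 + i)) '' Iic (2 * m)) ?_).trans
        ((h.eRk_dual_le hM 0 m rfl (by omega)).trans ?_)
      · rintro _ ⟨i, hi, rfl⟩
        have hi : i < n := hi
        exact mem_shift (by omega) (by omega)
      · norm_cast
    refine (add_le_add k1 k2).trans ?_
    norm_cast; omega

/-- Prepending `e` to a fan. The dual appears since the first triple of an `NFan` is a triad. -/
lemma cons (h : NFan M n g) {e : α} (heF : e ∉ g '' Iio n) (hd : M.Dep {e, g 0, g 1}) :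
    ∃ f : ℕ → α, NFan M✶ (n + 1) f ∧ f '' Iio (n + 1) = insert e (g '' Iio n) := by
  have hne : ∀ i < n, e ≠ g i := fun i hi he => heF ⟨i, hi, he.symm⟩
  refine ⟨fun k => Nat.casesOn k e g, ⟨?_, ?_, ?_, ?_⟩, ?_⟩
  · rintro (_ | i) hi (_ | j) hj hij
    · rfl
    · exact absurd hij (hne j (by simpa using hj))
    · exact absurd hij.symm (hne i (by simpa using hi))
    · rw [h.inj (by simpa using hi) (by simpa using hj) hij]
  · rintro (_ | i) hi
    · exact hd.subset_ground (by simp)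
    · exact h.mem i (by omega)
  · rintro (_ | i) hi hi2
    · rw [dual_dual]; exact hd
    · rw [dual_dual]; exact h.tri i (by omega) (by omega)
  · rintro (_ | i) hi hi2
    · omega
    · exact h.triad i (by omega) (by omega)
  · ext x
    constructor
    · rintro ⟨_ | i, hi, rfl⟩
      · exact Or.inl rfl
      · exact Or.inr ⟨i, by simpa using hi, rfl⟩
    · rintro (rfl | ⟨i, hi, rfl⟩)
      · exact ⟨0, by simp, rfl⟩
      · exact ⟨i + 1, by simpa using hi, rfl⟩

lemma reverse (h : NFan M n g) (hn : n % 2 = 1) : NFan M n (fun k => g (n - 1 - k)) where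
  inj := by
    intro i hi j hj hij
    simp only [mem_Iio] at hi hj
    have := h.inj (x₁ := n - 1 - i) (x₂ := n - 1 - j) (by simpa using by omega)
      (by simpa using by omega) hij
    omega
  mem i hi := h.mem _ (by omega)
  triad i hi hi2 := by
    have := h.triad (n - 3 - i) (by omega) (by omega)
    rw [show n - 3 - i + 1 = n - 1 - (i + 1) by omega, show n - 3 - i + 2 = n - 1 - i by omega,
      show n - 3 - i = n - 1 - (i + 2) by omega] at this
    rwa [insert_comm, pair_comm, insert_comm] at this
  tri i hi hi2 := by
    have := h.tri (n - 3 - i) (by omega) (by omega)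
    rw [show n - 3 - i + 1 = n - 1 - (i + 1) by omega, show n - 3 - i + 2 = n - 1 - i by omega,
      show n - 3 - i = n - 1 - (i + 2) by omega] at this
    rwa [insert_comm, pair_comm, insert_comm] at this

lemma image_reverse (n : ℕ) (g : ℕ → α) : (fun k => g (n - 1 - k)) '' Iio n = g '' Iio n := by
  ext x
  constructor
  · rintro ⟨i, hi, rfl⟩
    simp only [mem_Iio] at hi
    exact ⟨n - 1 - i, by simpa using by omega, rfl⟩
  · rintro ⟨i, hi, rfl⟩
    simp only [mem_Iio] at hi
    exact ⟨n - 1 - i, by simpa using by omega, by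
      show g (n - 1 - (n - 1 - i)) = g i
      rw [show n - 1 - (n - 1 - i) = i by omega]⟩

/-- In a fan of at most four elements, the second and third elements may be interchanged. -/
lemma swap (h : NFan M n g) (hn : 3 ≤ n) (hn' : n ≤ 4) :
    ∃ f : ℕ → α, NFan M n f ∧ f '' Iio n = g '' Iio n ∧ f 0 = g 0 ∧ f 1 = g 2 := by
  have hlt : ∀ i < n, Equiv.swap 1 2 i < n := by
    intro i hi
    rw [Equiv.swap_apply_def]
    split_ifs <;> omega
  have e0 : Equiv.swap (1 : ℕ) 2 0 = 0 := rfl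
  have e1 : Equiv.swap (1 : ℕ) 2 1 = 2 := rfl
  have e2 : Equiv.swap (1 : ℕ) 2 2 = 1 := rfl
  have e3 : Equiv.swap (1 : ℕ) 2 3 = 3 := rfl
  refine ⟨fun i => g (Equiv.swap 1 2 i), ⟨?_, fun i hi => h.mem _ (hlt i hi), ?_, ?_⟩, ?_, rfl, rfl⟩
  · intro i hi j hj hij
    exact (Equiv.swap 1 2).injective (h.inj (hlt i hi) (hlt j hj) hij)
  · intro i hi hi2
    obtain rfl : i = 0 := by omega
    have := h.triad 0 hi rfl
    simp only [zero_add, e0, e1, e2] at this ⊢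
    rwa [pair_comm (g 2)]
  · intro i hi hi2
    obtain rfl : i = 1 := by omega
    have := h.tri 1 hi rfl
    simp only [Nat.reduceAdd, e1, e2, e3] at this ⊢
    rwa [insert_comm]
  · ext x
    constructor
    · rintro ⟨i, hi, rfl⟩
      exact ⟨_, hlt i hi, rfl⟩
    · rintro ⟨i, hi, rfl⟩
      exact ⟨_, hlt i hi, by simp⟩

/-- A triangle consisting of an outside element `e` and two fan elements forces `e` to extend the
fan, possibly after reordering it: orthogonality with the triads of the fan only allows the two
elements at an end of the fan. -/
lemma extend (h : NFan M n g) (hM : NoTwoSep M) (hn : 3 ≤ n) {e : α} (heF : e ∉ g '' Iio n)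
    {i j : ℕ} (hij : i < j) (hj : j < n) (hd : M.Dep {e, g i, g j}) :
    ∃ f : ℕ → α, NFan M✶ (n + 1) f ∧ f '' Iio (n + 1) = insert e (g '' Iio n) := by
  have hne : ∀ i < n, e ≠ g i := fun i hi he => heF ⟨i, hi, he.symm⟩
  -- orthogonality of a triangle `{e, g a, g b}` with the triad starting at position `t`
  have ho : ∀ a b, a < n → b < n → a ≠ b → M.Dep {e, g a, g b} → ∀ t, t + 2 < n → t % 2 = 0 →
      (a = t ∨ a = t + 1 ∨ a = t + 2) → (b = t ∨ b = t + 1 ∨ b = t + 2) := by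
    intro a b ha hb hab hdab t ht ht2 hat
    by_contra hbt
    refine hM.ortho (a := g a) (b := e) (c := g b) (insert_comm e (g a) _ ▸ hdab) (h.triad t ht ht2)
      (hne a ha).symm (h.ne ha hb hab) (hne b hb) (h.ne (by omega) (by omega) (by omega))
      (h.ne (by omega) (by omega) (by omega)) (h.ne (by omega) (by omega) (by omega)) ?_ ?_ ?_
    · rcases hat with rfl | rfl | rfl <;> simp
    · simp only [mem_insert_iff, mem_singleton_iff, not_or]
      exact ⟨hne _ (by omega), hne _ (by omega), hne _ (by omega)⟩
    · simp only [mem_insert_iff, mem_singleton_iff, not_or]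
      exact ⟨h.ne hb (by omega) (by omega), h.ne hb (by omega) (by omega),
        h.ne hb (by omega) (by omega)⟩
  have hdji : M.Dep {e, g j, g i} := by rwa [pair_comm]
  have oij := ho i j (by omega) hj (by omega) hd
  have oji := ho j i hj (by omega) (by omega) hdji
  have hcases : (i = 0 ∧ j = 1) ∨ (i = 0 ∧ j = 2 ∧ n ≤ 4) ∨
      (n % 2 = 1 ∧ i = n - 2 ∧ j = n - 1) ∨ (n % 2 = 0 ∧ i = n - 3 ∧ j = n - 2) := by
    rcases Nat.mod_two_eq_zero_or_one i with hi2 | hi2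
    · have hi0 : i = 0 := by
        by_contra hi0
        have := oij (i - 2) (by omega) (by omega) (by omega)
        omega
      subst hi0
      have h0 := oij 0 (by omega) rfl (by omega)
      by_cases hj1 : j = 1
      · exact Or.inl ⟨rfl, hj1⟩
      · have hj2 : j = 2 := by omega
        refine Or.inr (Or.inl ⟨rfl, hj2, ?_⟩)
        by_contra hn4
        have := oji 2 (by omega) rfl (by omega)
        omega
    · have hj1 : j = i + 1 := by
        have := oij (i - 1) (by omega) (by omega) (by omega)
        omega
      have hj2 : n ≤ j + 2 := by
        by_contra hlt
        have := oji j (by omega) (by omega) (by omega)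
        omega
      omega
  rcases hcases with ⟨rfl, rfl⟩ | ⟨rfl, rfl, hn4⟩ | ⟨hodd, rfl, rfl⟩ | ⟨heven, rfl, rfl⟩
  · exact h.cons heF hd
  · obtain ⟨f, hf, hfi, hf0, hf1⟩ := h.swap hn hn4
    rw [← hfi] at heF ⊢
    exact hf.cons heF (by rwa [hf0, hf1])
  · have := (h.reverse hodd).cons (e := e) (by rwa [image_reverse]) (by
      simpa [Nat.sub_sub] using hdji)
    rwa [image_reverse] at this
  · -- here `e` and `g (n - 1)` both lie on the line through `g (n - 3)` and `g (n - 2)`, so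
    -- `{e, g (n - 2), g (n - 1)}` is a triangle meeting the last triad in one element
    exfalso
    have c1 : e ∈ M.closure {g (n - 3), g (n - 2)} := by
      refine hM.mem_closure (a := g (n - 3)) (b := g (n - 2)) (c := e) ?_
        (h.ne (by omega) (by omega) (by omega)) (hne _ (by omega)).symm (hne _ (by omega)).symm
      rwa [pair_comm (g (n - 2)), insert_comm]
    have c2 : g (n - 1) ∈ M.closure {g (n - 3), g (n - 2)} := by
      refine hM.mem_closure (a := g (n - 3)) (b := g (n - 2)) (c := g (n - 1)) ?_
        (h.ne (by omega) (by omega) (by omega)) (h.ne (by omega) (by omega) (by omega))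
        (h.ne (by omega) (by omega) (by omega))
      have := h.tri (n - 3) (by omega) (by omega)
      rwa [show n - 3 + 1 = n - 2 by omega, show n - 3 + 2 = n - 1 by omega] at this
    have hsub : ({e, g (n - 2), g (n - 1)} : Set α) ⊆ M.closure {g (n - 3), g (n - 2)} := by
      simp only [insert_subset_iff, singleton_subset_iff]
      exact ⟨c1, M.mem_closure_of_mem' (by simp) (h.mem _ (by omega)), c2⟩
    have hdep : M.Dep {e, g (n - 2), g (n - 1)} := by
      refine ⟨fun hind => ?_, hsub.trans (M.closure_subset_ground _)⟩
      have h1 := M.eRk_mono hsub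
      rw [hind.eRk_eq_encard, eRk_closure_eq, encard_insert_of_notMem (by
        simp only [mem_insert_iff, mem_singleton_iff, not_or]
        exact ⟨hne _ (by omega), hne _ (by omega)⟩),
        encard_pair (h.ne (by omega) (by omega) (by omega))] at h1
      have h2 := h1.trans ((M.eRk_le_encard _).trans (encard_pair_le_two _ _))
      norm_num at h2
    have := ho (n - 2) (n - 1) (by omega) (by omega) (by omega) hdep (n - 4) (by omega) (by omega)
      (by omega)
    omega

/-- The theorem for a fan starting with a triad, in terms of cyclic fans. -/
lemma exists_cycFan (h : NFan M n g) (hM : NoTwoSep M) (hn : 3 ≤ n) {e x y z : α}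
    (heF : e ∉ g '' Iio n) (hx : x ∈ g '' Iio n) (hy : y ∈ g '' Iio n) (hz : z ∈ g '' Iio n)
    (hxy : x ≠ y) (hyz : y ≠ z) (hd : M.Dep {e, x, y}) (hd' : M✶.Dep {e, y, z}) :
    ∃ (r : ℕ) (s w : ZMod r → α), CycFan M r s w := by
  have hne : ∀ {a}, a ∈ g '' Iio n → a ≠ e := fun ha hae => heF (hae ▸ ha)
  have hcl : e ∈ M.closure (g '' Iio n) := by
    refine M.closure_subset_closure ?_ (hM.mem_closure (a := x) (b := y) ?_ hxy (hne hx) (hne hy))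
    · exact insert_subset hx (singleton_subset_iff.2 hy)
    · exact (show ({e, x, y} : Set α) = {x, y, e} by grind) ▸ hd
  have hcl' : e ∈ M✶.closure (g '' Iio n) := by
    refine M✶.closure_subset_closure ?_
      (hM.dual.mem_closure (a := y) (b := z) ?_ hyz (hne hy) (hne hz))
    · exact insert_subset hy (singleton_subset_iff.2 hz)
    · exact (show ({e, y, z} : Set α) = {y, z, e} by grind) ▸ hd'
  have hsub : insert e (g '' Iio n) ⊆ M.E := by
    refine insert_subset (M.closure_subset_ground _ hcl) ?_
    rintro _ ⟨i, hi, rfl⟩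
    exact h.mem i hi
  rcases encard_le_one_iff_eq.1 (h.compl_le_one hM hn heF hcl hcl') with h0 | ⟨f, hf⟩
  · have hE : M.E = insert e (g '' Iio n) := (sdiff_eq_empty.1 h0).antisymm hsub
    rcases Nat.even_or_odd' n with ⟨m, hm | hm⟩
    · exact (h.not_even hM hm (by omega) heF hE).elim
    · exact h.cycFan_of_odd hM hm (by omega) heF hE
  · have hfm : f ∈ M.E \ insert e (g '' Iio n) := by rw [hf]; rfl
    have hE : M.E = insert f (insert e (g '' Iio n)) := by
      rw [← union_sdiff_cancel hsub, hf, union_singleton]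
    obtain ⟨k, hk, hkim⟩ : ∃ k : ℕ → α, NFan M✶ (n + 1) k ∧
        k '' Iio (n + 1) = insert e (g '' Iio n) := by
      obtain ⟨i, hi, rfl⟩ := hx
      obtain ⟨j, hj, rfl⟩ := hy
      rcases lt_trichotomy i j with hij | rfl | hij
      · exact h.extend hM hn heF hij hj hd
      · exact (hxy rfl).elim
      · exact h.extend hM hn heF hij hi (by rwa [pair_comm])
    rw [← hkim] at hE hfm
    rcases Nat.even_or_odd' n with ⟨m, hm | hm⟩
    · obtain ⟨r, s, w, hc⟩ := hk.cycFan_of_odd hM.dual (by omega : n + 1 = 2 * m + 1) (by omega)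
        hfm.2 hE
      have := hc.dual
      rw [dual_dual] at this
      exact ⟨_, _, _, this⟩
    · exact (hk.not_even hM.dual (by omega : n + 1 = 2 * (m + 1)) (by omega) hfm.2 hE).elim

end NFan

/-! ### Translation from fans -/

lemma dep_of_triOrTriad {b : Bool} {T : Set α} (h : TriOrTriad M b T) :
    (b = true → M.Dep T) ∧ (b = false → M✶.Dep T) := by
  cases b
  · exact ⟨by simp, fun _ => h.1.1⟩
  · exact ⟨fun _ => h.1.1, by simp⟩

/-- A fan starting with a triad is an `NFan` of `M` after shifting the index by one; a fan starting
with a triangle is an `NFan` of the dual. -/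
lemma nFan_of_isFanFun {b : Bool} {n : ℕ} {e : ℕ → α} (h : IsFanFun M b n e) :
    NFan (if b then M✶ else M) n (fun i => e (i + 1)) := by
  obtain ⟨-, hinj, hmem, htri⟩ := h
  have hinj' : InjOn (fun i => e (i + 1)) (Iio n) := by
    intro i hi j hj hij
    simp only [mem_Iio] at hi hj
    have := hinj (i + 1) (j + 1) (by omega) (by omega) (by omega) (by omega) hij
    omega
  cases b
  · refine ⟨hinj', fun i hi => hmem _ (by omega) (by omega), fun i hi hi2 => ?_, fun i hi hi2 => ?_⟩
    · exact (dep_of_triOrTriad (htri (i + 1) (by omega) (by omega))).2 (by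
        simp [posBool]; omega)
    · exact (dep_of_triOrTriad (htri (i + 1) (by omega) (by omega))).1 (by
        simp [posBool]; omega)
  · refine ⟨hinj', fun i hi => hmem _ (by omega) (by omega), fun i hi hi2 => ?_, fun i hi hi2 => ?_⟩
    · simp only [if_true, dual_dual]
      exact (dep_of_triOrTriad (htri (i + 1) (by omega) (by omega))).1 (by
        simp [posBool]; omega)
    · exact (dep_of_triOrTriad (htri (i + 1) (by omega) (by omega))).2 (by
        simp [posBool]; omega)

lemma ne_of_encard_three {e x y : α} (h : ({e, x, y} : Set α).encard = 3) : x ≠ y := by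
  rintro rfl
  have := encard_pair_le_two e x
  simp only [mem_singleton_iff, insert_eq_of_mem] at h
  rw [h] at this
  norm_num at this

end FanProof

/-- If some element outside a fan of the 3-connected matroid `M` lies in a triangle and
a triad whose remaining elements all belong to the fan, then `M` is a wheel or a whirl. -/
theorem statement12 (M : Matroid α) (hM3 : ThreeConn M) (hcard : 4 ≤ M.E.encard)
    (b : Bool) (n : ℕ) (e' : ℕ → α) (hfan : IsFanFun M b n e')
    (e : α) (he : e ∈ M.E) (heF : e ∉ fanSet n e')
    (x y z : α) (hx : x ∈ fanSet n e') (hy : y ∈ fanSet n e') (hz : z ∈ fanSet n e')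
    (htri : IsTriangle M {e, x, y}) (htriad : IsTriad M {e, y, z}) :
    IsWheel M ∨ IsWhirl M := by
  have hM := FanProof.noTwoSep_of_threeConn hM3 hcard
  have hF : fanSet n e' = (fun i => e' (i + 1)) '' Iio n := by
    ext a
    constructor
    · rintro ⟨i, h1, h2, rfl⟩
      exact ⟨i - 1, by simpa using by omega, by simp [Nat.sub_add_cancel h1]⟩
    · rintro ⟨i, hi, rfl⟩
      simp only [mem_Iio] at hi
      exact ⟨i + 1, by omega, by omega, rfl⟩
  rw [hF] at heF hx hy hz
  have hN := FanProof.nFan_of_isFanFun hfan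
  have hxy := FanProof.ne_of_encard_three htri.2
  have hyz := FanProof.ne_of_encard_three htriad.2
  obtain ⟨r, s, w, hc⟩ : ∃ (r : ℕ) (s w : ZMod r → α), FanProof.CycFan M r s w := by
    cases b
    · exact hN.exists_cycFan hM hfan.1 heF hx hy hz hxy hyz htri.1.1 htriad.1.1
    · simp only [if_true] at hN
      obtain ⟨r, s, w, hc⟩ := hN.exists_cycFan hM.dual hfan.1 heF hz hy hx hyz.symm hxy.symm
        (pair_comm y z ▸ htriad.1.1) (by rw [dual_dual, pair_comm]; exact htri.1.1)
      have := hc.dual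
      rw [dual_dual] at this
      exact ⟨_, _, _, this⟩
  exact hc.wheel_or_whirl hM
end

section
/- Let M be a 3-connected matroid such that |E(M)| >= 4 and M is neither a wheel nor a whirl, and let (e_1, ..., e_n) be a fan of M. If T ⊆ {e_1, ..., e_n} is a triangle of M, then T = {e_i, e_{i+1}, e_{i+2}} for some i ∈ {1, ..., n−2} such that e_i is a spoke element. -/
/-!
Let `T` be a triangle inside the fan `(e_1, ..., e_n)`. A circuit and a cocircuit never meet in
exactly one element, and every interior spoke index `i` is the centre of a triad
`{e_{i-1}, e_i, e_{i+1}}`. This, together with the fact that two triangles sharing two elements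
lie on a common line, restricts `T` so much that only a few configurations survive besides the
consecutive ones (`FanSys.consec`):

* `T` is also a triad (`Good.triangle_triad`);
* `T` consists of three consecutive rim elements (`Good.rim_triangle`);
* the fan has even length and `T` consists of its two last elements and its first one, or of its
  two first elements and its last one, so that the triangles of the fan close up cyclically.

Each of them makes `M` a wheel or a whirl. The cyclic case is `Good.core`, to which the rank-3 case
is reduced by adjoining a sixth element. For a cyclic chain of `k` triangles with spokes `s i` and
rim elements `w i`, the `k` spokes span everything in the chain, and each of the `k - 1` known
triads lowers the rank of the complement of their union by one (`Good.chain_rk`, by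
submodularity). As there is no 2-separation, the chain is the whole ground set and the spokes form
a base. Finally `wheel_or_whirl` determines all circuits of a matroid having a base of spokes in
which every rim element forms a triangle with its two neighbouring spokes: by orthogonality with
the fundamental cocircuits of the spokes, a circuit missing some rim element consists of two
spokes and an arc of the rim between them, and the matroid is a wheel or a whirl according as the
rim is dependent or independent.
-/

open Matroid Set

universe u

variable {α : Type u}

open PaperDefs

namespace FanTriangle

/-! ### Translation to the library's notions -/

lemma isCircuit_iff' {M : Matroid α} {C : Set α} :
    PaperDefs.IsCircuit M C ↔ M.IsCircuit C :=
  Matroid.isCircuit_iff_forall_ssubset.symm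

lemma erk_eq_eRk (M : Matroid α) (X : Set α) : erk M X = M.eRk X := by
  apply le_antisymm
  · refine iSup₂_le fun I hI => ?_
    exact hI.1.encard_le_eRk_of_subset hI.2
  · obtain ⟨I, hI⟩ := M.exists_isBasis' X
    rw [← hI.encard_eq_eRk]
    exact le_iSup₂_of_le I ⟨hI.indep, hI.subset⟩ le_rfl

/-! ### Consequences of 3-connectivity -/

/-- The consequences of 3-connectivity, for a matroid with at least four elements, that the
argument uses: finite rank, simplicity, absence of coloops, and absence of 2-separations. -/
structure Good (M : Matroid α) : Prop where
  fin : M.eRank ≠ ⊤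
  pair : ∀ a ∈ M.E, ∀ b ∈ M.E, a ≠ b → M.Indep {a, b}
  coloop : ∀ x ∈ M.E, M.eRk (M.E \ {x}) = M.eRank
  sep : ∀ X ⊆ M.E, 2 ≤ X.encard → 2 ≤ (M.E \ X).encard →
    ¬ M.eRk X + M.eRk (M.E \ X) ≤ M.eRank + 1

lemma encard_pair_le (a b : α) : ({a, b} : Set α).encard ≤ 2 :=
  (Set.encard_insert_le {b} a).trans (by rw [Set.encard_singleton, one_add_one_eq_two])

lemma encard_triple_le (a b c : α) : ({a, b, c} : Set α).encard ≤ 3 :=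
  (Set.encard_insert_le {b, c} a).trans
    ((add_le_add_left (encard_pair_le b c) 1).trans (by norm_num))

lemma two_le_encard {X : Set α} {a b : α} (ha : a ∈ X) (hb : b ∈ X) (hab : a ≠ b) :
    2 ≤ X.encard := by
  rw [← Set.encard_pair hab]
  exact Set.encard_le_encard (Set.insert_subset ha (Set.singleton_subset_iff.2 hb))

lemma two_le_encard_diff_pair {E : Set α} (h : 4 ≤ E.encard) (a b : α) :
    2 ≤ (E \ {a, b}).encard := by
  by_contra hlt
  have h1 := Set.encard_le_encard_sdiff_add_encard E {a, b}
  have h2 : ({a, b} : Set α).encard ≤ 2 := encard_pair_le a b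
  have h3 : (E \ {a, b}).encard ≤ 1 := by
    rw [not_le] at hlt
    exact Order.le_of_lt_add_one (by simpa [one_add_one_eq_two] using hlt)
  have h4 : E.encard ≤ 1 + 2 := h1.trans (add_le_add h3 h2)
  have h5 := h.trans h4
  norm_num at h5

lemma ThreeConn.good {M : Matroid α} (h : ThreeConn M) (hcard : 4 ≤ M.E.encard) : Good M := by
  have hsep : ∀ X ⊆ M.E, 2 ≤ X.encard → 2 ≤ (M.E \ X).encard →
      ¬ M.eRk X + M.eRk (M.E \ X) ≤ M.eRank + 1 := by
    intro X hX h1 h2 h3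
    refine h.2 X (M.E \ X) ⟨Set.union_sdiff_cancel hX, Set.disjoint_sdiff_right, h1, h2, ?_⟩
    simpa [erk_eq_eRk] using h3
  -- every element lies in a circuit with at least two elements
  have hex : ∀ x ∈ M.E, ∃ C, M.IsCircuit C ∧ x ∈ C ∧ ∃ y ∈ C, y ≠ x := by
    intro x hx
    have : ∃ y ∈ M.E, y ≠ x := by
      by_contra! hcon
      have : M.E ⊆ {x} := fun y hy => hcon y hy
      have := hcard.trans (Set.encard_le_encard this)
      rw [Set.encard_singleton] at this
      norm_num at this
    obtain ⟨y, hy, hyx⟩ := this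
    rcases h.1.2 x hx y hy with ⟨h1, -⟩ | ⟨C, hC, hxC, hyC⟩
    · exact absurd h1.symm hyx
    · exact ⟨C, isCircuit_iff'.1 hC, hxC, y, hyC, hyx⟩
  have hloop : ∀ x ∈ M.E, M.Indep {x} := by
    intro x hx
    obtain ⟨C, hC, hxC, y, hyC, hyx⟩ := hex x hx
    refine hC.ssubset_indep ⟨Set.singleton_subset_iff.2 hxC, fun hsub => hyx (hsub hyC)⟩
  obtain ⟨a, ha⟩ := h.1.1
  obtain ⟨-, -, -, b, hbC, hab⟩ := hex a ha
  refine ⟨?_, ?_, ?_, hsep⟩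
  · intro htop
    obtain ⟨C, hC, haC, b, hbC, hab⟩ := hex a ha
    have hbE := hC.subset_ground hbC
    refine hsep {a, b} (Set.insert_subset ha (Set.singleton_subset_iff.2 hbE))
      (two_le_encard (by simp) (by simp) hab.symm) (two_le_encard_diff_pair hcard a b) ?_
    simp [htop]
  · intro a ha b hb hab
    by_contra hdep
    have hsub : ({a, b} : Set α) ⊆ M.E := Set.insert_subset ha (Set.singleton_subset_iff.2 hb)
    refine hsep {a, b} hsub
      (two_le_encard (by simp) (by simp) hab) (two_le_encard_diff_pair hcard a b) ?_
    have h1 : M.eRk {a, b} < 2 := by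
      rw [← Set.encard_pair hab]
      exact Matroid.eRk_lt_encard_of_dep_of_finite (Set.toFinite _) ((Matroid.not_indep_iff hsub).1 hdep)
    have h2 : M.eRk {a, b} ≤ 1 :=
      Order.le_of_lt_add_one (by simpa [one_add_one_eq_two] using h1)
    rw [add_comm]
    exact add_le_add (M.eRk_le_eRank _) h2
  · intro x hx
    obtain ⟨C, hC, hxC, -⟩ := hex x hx
    have := hC.not_isColoop_of_mem hxC
    rw [Matroid.isColoop_iff_sdiff_not_spanning, not_not] at this
    exact this.eRk_eq

/-- The complement of a cocircuit is not spanning. -/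
lemma Good.cocircuit_rk {M : Matroid α} (hM : Good M) {K : Set α} (hK : M.IsCocircuit K) :
    M.eRk (M.E \ K) + 1 ≤ M.eRank := by
  have : M.RankFinite := M.eRank_ne_top_iff.1 hM.fin
  have h := (Matroid.isCocircuit_iff_minimal_compl_nonspanning.1 hK).prop
  rw [Matroid.spanning_iff_eRk_le, not_le] at h
  exact Order.add_one_le_of_lt h

/-- In a simple matroid a dependent triple of distinct elements is a triangle. -/
lemma Good.triangle_of_rk {M : Matroid α} (hM : Good M) {a b c : α} (ha : a ∈ M.E) (hb : b ∈ M.E)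
    (hc : c ∈ M.E) (hab : a ≠ b) (hac : a ≠ c) (hbc : b ≠ c) (h : M.eRk {a, b, c} ≤ 2) :
    M.IsCircuit {a, b, c} := by
  have hE : ({a, b, c} : Set α) ⊆ M.E := by
    rintro x (rfl | rfl | rfl) <;> assumption
  rw [Matroid.isCircuit_iff_dep_forall_sdiff_singleton_indep]
  constructor
  · rw [← Matroid.not_indep_iff hE]
    intro hi
    have h3 : ({a, b, c} : Set α).encard = 3 := Set.encard_eq_three.2 ⟨a, b, c, hab, hac, hbc, rfl⟩
    rw [hi.eRk_eq_encard, h3] at h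
    norm_num at h
  · rintro x (rfl | rfl | rfl)
    · exact (hM.pair _ hb _ hc hbc).subset (by rintro y ⟨rfl | rfl | rfl, hy⟩ <;> simp_all)
    · exact (hM.pair _ ha _ hc hac).subset (by rintro y ⟨rfl | rfl | rfl, hy⟩ <;> simp_all)
    · exact (hM.pair _ ha _ hb hab).subset (by rintro y ⟨rfl | rfl | rfl, hy⟩ <;> simp_all)

lemma circuit_rk_le {M : Matroid α} {a b c : α} (h : M.IsCircuit {a, b, c}) :
    M.eRk {a, b, c} ≤ 2 := by
  have h1 := h.eRk_add_one_eq
  have h2 : ({a, b, c} : Set α).encard ≤ 3 := encard_triple_le a b c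
  have h3 : M.eRk {a, b, c} + 1 ≤ 2 + 1 := by rw [h1]; exact h2
  exact (ENat.add_le_add_iff_right (by simp)).1 h3

/-- If `y` lies in a circuit `{x, y, z}` then `y` is spanned by any set spanning `x` and `z`. -/
lemma mem_closure_of_triangle {M : Matroid α} {x y z : α} (h : M.IsCircuit {x, y, z})
    {X : Set α} (hx : x ∈ M.closure X) (hz : z ∈ M.closure X) : y ∈ M.closure X := by
  have h1 := h.mem_closure_sdiff_singleton_of_mem (e := y) (by simp)
  refine Matroid.closure_subset_closure_of_subset_closure ?_ h1
  rintro t ⟨rfl | rfl | rfl, ht⟩ <;> simp_all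

/-- Two distinct triangles sharing `a` and `b` lie on a common line. -/
lemma Good.exchange {M : Matroid α} (hM : Good M) {a b c d : α} (h1 : M.IsCircuit {a, b, c})
    (h2 : M.IsCircuit {a, b, d}) (hac : a ≠ c) (had : a ≠ d) (hcd : c ≠ d) :
    M.IsCircuit {a, c, d} := by
  have E1 := h1.subset_ground
  have E2 := h2.subset_ground
  have ha : a ∈ M.E := E1 (by simp)
  have hb : b ∈ M.E := E1 (by simp)
  have hc : c ∈ M.E := E1 (by simp)
  have hd : d ∈ M.E := E2 (by simp)
  refine hM.triangle_of_rk ha hc hd hac had hcd ?_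
  have hsub : ({a, b} : Set α) ⊆ M.E := Set.insert_subset ha (Set.singleton_subset_iff.2 hb)
  have hA : a ∈ M.closure {a, b} := M.subset_closure _ hsub (by simp)
  have hB : b ∈ M.closure {a, b} := M.subset_closure _ hsub (by simp)
  have hC : c ∈ M.closure {a, b} := mem_closure_of_triangle (x := a) (z := b)
    (by convert! h1 using 1; ext; simp; tauto) hA hB
  have hD : d ∈ M.closure {a, b} := mem_closure_of_triangle (x := a) (z := b)
    (by convert! h2 using 1; ext; simp; tauto) hA hB
  calc M.eRk {a, c, d} ≤ M.eRk (M.closure {a, b}) := M.eRk_mono (by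
        rintro t (rfl | rfl | rfl) <;> assumption)
    _ = M.eRk {a, b} := M.eRk_closure_eq _
    _ ≤ ({a, b} : Set α).encard := M.eRk_le_encard _
    _ ≤ 2 := encard_pair_le a b

/-! ### Recognising wheels and whirls -/

section Cyclic

variable {M : Matroid α} {k : ℕ} {s w : ZMod k → α}

/-- A circuit containing exactly one of `w i` and `w (i + 1)` contains `s (i + 1)`: otherwise it
would meet `{w i, s (i + 1), w (i + 1)}`, the fundamental cocircuit of `s (i + 1)` with respect to
the base of spokes, in a single element. -/
lemma spoke_mem (hs : Function.Injective s) (hk : (1 : ZMod k) ≠ 0)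
    (hE : M.E = Set.range s ∪ Set.range w) (hS : M.Indep (Set.range s))
    (htri : ∀ i, M.IsCircuit {s i, w i, s (i + 1)}) {C : Set α} (hC : M.IsCircuit C)
    {i : ZMod k} (h : (w i ∈ C ∧ w (i + 1) ∉ C) ∨ (w i ∉ C ∧ w (i + 1) ∈ C)) :
    s (i + 1) ∈ C := by
  by_contra hsi
  set H := M.closure (Set.range s \ {s (i + 1)}) with hH
  have hnot : s (i + 1) ∉ H := hS.notMem_closure_sdiff_of_mem (Set.mem_range_self _)
  have hsH : ∀ j, j ≠ i + 1 → s j ∈ H := fun j hj =>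
    M.mem_closure_of_mem' ⟨Set.mem_range_self j, fun h => hj (hs h)⟩
      (hE ▸ Or.inl (Set.mem_range_self j))
  have hwH : ∀ j, j ≠ i → j ≠ i + 1 → w j ∈ H := fun j h1 h2 =>
    mem_closure_of_triangle (htri j) (hsH j h2) (hsH (j + 1) fun h => h1 (add_right_cancel h))
  -- the element of the cocircuit in `C` would be spanned by the hyperplane `H`
  have key : ∀ x ∈ C, (∀ y ∈ C, y ≠ x → y ∈ H) → x ∈ H := fun x hx hy =>
    Matroid.closure_subset_closure_of_subset_closure
      (fun y hyC => hy y hyC.1 hyC.2) (hC.mem_closure_sdiff_singleton_of_mem hx)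
  have hCE : ∀ y ∈ C, (∃ j, s j = y) ∨ ∃ j, w j = y := fun y hy => by
    have := hC.subset_ground hy
    rwa [hE] at this
  rcases h with ⟨h1, h2⟩ | ⟨h1, h2⟩
  · have hx : w i ∈ H := key _ h1 fun y hy hne => by
      rcases hCE y hy with ⟨j, rfl⟩ | ⟨j, rfl⟩
      · exact hsH j fun h => hsi (h ▸ hy)
      · exact hwH j (fun h => hne (h ▸ rfl)) fun h => h2 (h ▸ hy)
    have hi : s i ∈ H := hsH i fun h => hk (by simpa using h)
    exact hnot (mem_closure_of_triangle (x := s i) (z := w i)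
      (by convert! htri i using 1; ext; simp; tauto) hi hx)
  · have hx : w (i + 1) ∈ H := key _ h2 fun y hy hne => by
      rcases hCE y hy with ⟨j, rfl⟩ | ⟨j, rfl⟩
      · exact hsH j fun h => hsi (h ▸ hy)
      · exact hwH j (fun h => h1 (h ▸ hy)) (fun h => hne (h ▸ rfl))
    have hi : s (i + 1 + 1) ∈ H := hsH _ fun h => hk (by simpa using h)
    exact hnot (mem_closure_of_triangle (x := w (i + 1)) (z := s (i + 1 + 1))
      (by convert! htri (i + 1) using 1; ext; simp; tauto) hx hi)

/-- The cyclic interval starting at `i` with `m` elements. -/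
lemma mem_cycArc_add [NeZero k] {i x : ZMod k} {m : ℕ} (hm : m < k) :
    x ∈ cycArc k i (i + m) ↔ ∃ l < m, x = i + (l : ZMod k) := by
  simp [cycArc, ZMod.val_natCast_of_lt hm]

lemma exists_eq_add [NeZero k] {i j : ZMod k} (hij : i ≠ j) :
    ∃ m : ℕ, 0 < m ∧ m < k ∧ j = i + (m : ZMod k) := by
  refine ⟨(j - i).val, ?_, ZMod.val_lt _, by simp⟩
  rw [Nat.pos_iff_ne_zero, Ne, ZMod.val_eq_zero, sub_eq_zero]
  exact fun h => hij h.symm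

lemma right_notMem_cycArc [NeZero k] {i j : ZMod k} (hij : i ≠ j) : j ∉ cycArc k i j := by
  obtain ⟨m, -, hm, rfl⟩ := exists_eq_add hij
  rw [mem_cycArc_add hm]
  rintro ⟨l, hl, h⟩
  have h2 := congrArg ZMod.val (add_left_cancel h)
  rw [ZMod.val_natCast_of_lt hm, ZMod.val_natCast_of_lt (hl.trans hm)] at h2
  omega

lemma left_mem_cycArc [NeZero k] {i j : ZMod k} (hij : i ≠ j) : i ∈ cycArc k i j := by
  obtain ⟨m, h0, hm, rfl⟩ := exists_eq_add hij
  exact (mem_cycArc_add hm).2 ⟨0, h0, by simp⟩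

/-- Two spokes together with an arc of the rim joining them are dependent. -/
lemma arc_dep [NeZero k] (hs : Function.Injective s) (hsw : ∀ i j, s i ≠ w j)
    (hE : M.E = Set.range s ∪ Set.range w)
    (htri : ∀ i, M.IsCircuit {s i, w i, s (i + 1)}) {i j : ZMod k} (hij : i ≠ j) :
    M.Dep ({s i, s j} ∪ w '' cycArc k i j) := by
  have hsE : ∀ i, s i ∈ M.E := fun i => hE ▸ Or.inl (Set.mem_range_self i)
  have hwE : ∀ i, w i ∈ M.E := fun i => hE ▸ Or.inr (Set.mem_range_self i)
  obtain ⟨m, h0, hm, rfl⟩ := exists_eq_add hij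
  set X := insert (s i) (w '' cycArc k i (i + m)) with hX
  have hcl : ∀ l ≤ m, s (i + (l : ZMod k)) ∈ M.closure X := by
    intro l
    induction l with
    | zero => intro _; exact M.mem_closure_of_mem' (by simp [hX]) (hsE _)
    | succ l ih =>
      intro hl
      have h1 := ih (by omega)
      have h2 : w (i + (l : ZMod k)) ∈ M.closure X := M.mem_closure_of_mem'
        (Or.inr ⟨_, (mem_cycArc_add hm).2 ⟨l, by omega, rfl⟩, rfl⟩) (hwE _)
      refine mem_closure_of_triangle (x := s (i + (l : ZMod k))) (z := w (i + (l : ZMod k))) ?_ h1 h2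
      convert! htri (i + (l : ZMod k)) using 1
      ext; simp [add_assoc]; tauto
  have hnot : s (i + m) ∉ X := by
    rintro (h | ⟨x, -, h⟩)
    · exact hij (hs h).symm
    · exact hsw _ _ h.symm
  have heq : {s i, s (i + m)} ∪ w '' cycArc k i (i + m) = insert (s (i + m)) X := by
    ext; simp [hX]; tauto
  have hsub : insert (s (i + m)) X ⊆ M.E := by
    rintro x (rfl | rfl | ⟨x, -, rfl⟩)
    exacts [hsE _, hsE _, hwE _]
  rw [heq, ← Matroid.not_indep_iff hsub]
  intro hind
  have := hind.notMem_closure_sdiff_of_mem (Set.mem_insert _ _)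
  rw [Set.insert_sdiff_self_of_notMem hnot] at this
  exact this (hcl m le_rfl)

/-- A circuit missing some rim element is formed by two spokes and an arc of the rim. -/
lemma circuit_arc [NeZero k] (hs : Function.Injective s) (hk : (1 : ZMod k) ≠ 0)
    (hsw : ∀ i j, s i ≠ w j)
    (hE : M.E = Set.range s ∪ Set.range w) (hS : M.Indep (Set.range s))
    (htri : ∀ i, M.IsCircuit {s i, w i, s (i + 1)}) {C : Set α} (hC : M.IsCircuit C)
    (hCw : ¬ Set.range w ⊆ C) : ∃ i j, i ≠ j ∧ C = {s i, s j} ∪ w '' cycArc k i j := by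
  obtain ⟨p, hp⟩ : ∃ p, w p ∉ C := by
    by_contra! h
    exact hCw (by rintro _ ⟨x, rfl⟩; exact h x)
  obtain ⟨q, hq⟩ : ∃ q, w q ∈ C := by
    by_contra! h
    refine hC.not_indep (hS.subset fun x hx => ?_)
    have hxE := hC.subset_ground hx
    rw [hE] at hxE
    rcases hxE with h1 | ⟨y, rfl⟩
    · exact h1
    · exact absurd hx (h y)
  -- an arc of rim elements of `C` begins somewhere
  obtain ⟨i, hi1, hi2⟩ : ∃ i, w i ∉ C ∧ w (i + 1) ∈ C := by
    by_contra! h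
    have : ∀ m : ℕ, w (p + (m : ZMod k)) ∉ C := by
      intro m
      induction m with
      | zero => simpa using hp
      | succ m ih => have := h _ ih; simpa [add_assoc] using this
    exact this (q - p).val (by simpa using hq)
  have hex : ∃ m : ℕ, w (i + 1 + (m : ZMod k)) ∉ C :=
    ⟨(-1 : ZMod k).val, by simpa using hi1⟩
  classical
  set m := Nat.find hex with hm
  have hm1 : w (i + 1 + (m : ZMod k)) ∉ C := Nat.find_spec hex
  have hm2 : ∀ l < m, w (i + 1 + (l : ZMod k)) ∈ C := fun l hl => not_not.1 (Nat.find_min hex hl)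
  have hm0 : 0 < m := by
    rw [Nat.pos_iff_ne_zero]
    intro h0
    rw [h0] at hm1
    simp [hi2] at hm1
  have hmk : m < k := lt_of_le_of_lt (Nat.find_min' hex (by simpa using hi1))
    (ZMod.val_lt (-1 : ZMod k))
  have hne : i + 1 ≠ i + 1 + (m : ZMod k) := by
    intro h
    have h2 := congrArg ZMod.val (left_eq_add.1 h)
    rw [ZMod.val_natCast_of_lt hmk, ZMod.val_zero] at h2
    omega
  refine ⟨i + 1, i + 1 + m, hne, ?_⟩
  refine (hC.eq_of_dep_subset (arc_dep hs hsw hE htri hne) ?_).symm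
  have hs1 : s (i + 1) ∈ C := spoke_mem hs hk hE hS htri hC (Or.inr ⟨hi1, hi2⟩)
  have hs2 : s (i + 1 + m) ∈ C := by
    obtain ⟨l, hl⟩ : ∃ l, m = l + 1 := ⟨m - 1, by omega⟩
    have hcast : i + 1 + (m : ZMod k) = (i + 1 + l) + 1 := by rw [hl]; push_cast; ring
    rw [hcast] at hm1 ⊢
    exact spoke_mem hs hk hE hS htri hC (Or.inl ⟨hm2 l (by omega), hm1⟩)
  rintro x ((rfl | rfl) | ⟨y, hy, rfl⟩)
  · exact hs1
  · exact hs2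
  · obtain ⟨l, hl, rfl⟩ := (mem_cycArc_add hmk).1 hy
    exact hm2 l hl

/-- A matroid with a base of spokes in which every rim element forms a triangle with its two
neighbouring spokes is a wheel or a whirl, according as the rim is dependent or not. -/
lemma wheel_or_whirl (hk : 2 ≤ k) (hinj : Function.Injective (Sum.elim s w))
    (hE : M.E = Set.range s ∪ Set.range w) (hS : M.IsBase (Set.range s))
    (htri : ∀ i, M.IsCircuit {s i, w i, s (i + 1)}) : IsWheel M ∨ IsWhirl M := by
  have : NeZero k := ⟨by omega⟩
  have : Fact (1 < k) := ⟨by omega⟩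
  have hk1 : (1 : ZMod k) ≠ 0 := one_ne_zero
  have hs : Function.Injective s := fun a b h => Sum.inl_injective (hinj (a₁ := .inl a) (a₂ := .inl b) h)
  have hw : Function.Injective w := fun a b h => Sum.inr_injective (hinj (a₁ := .inr a) (a₂ := .inr b) h)
  have hsw : ∀ i j, s i ≠ w j := fun i j h => by
    have := hinj (a₁ := .inl i) (a₂ := .inr j) h
    simp at this
  have hwE : Set.range w ⊆ M.E := by rw [hE]; exact Set.subset_union_right
  have hsE : ∀ i, s i ∈ M.E := fun i => hE ▸ Or.inl (Set.mem_range_self i)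
  have hclass := fun (C : Set α) (hC : M.IsCircuit C) (h : ¬ Set.range w ⊆ C) =>
    circuit_arc hs hk1 hsw hE hS.indep htri hC h
  have harc : ∀ i j, i ≠ j → M.IsCircuit ({s i, s j} ∪ w '' cycArc k i j) := by
    intro i j hij
    obtain ⟨C, hCsub, hC⟩ := (arc_dep hs hsw hE htri hij).exists_isCircuit_subset
    have hwmem : ∀ x, w x ∈ {s i, s j} ∪ w '' cycArc k i j → x ∈ cycArc k i j := by
      rintro x ((h | h) | ⟨y, hy, h⟩)
      · exact absurd h.symm (hsw _ _)
      · exact absurd h.symm (hsw _ _)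
      · exact hw h ▸ hy
    have hsmem : ∀ x, s x ∈ {s i, s j} ∪ w '' cycArc k i j → x = i ∨ x = j := by
      rintro x ((h | h) | ⟨y, hy, h⟩)
      · exact Or.inl (hs h)
      · exact Or.inr (hs h)
      · exact absurd h.symm (hsw _ _)
    have hnw : ¬ Set.range w ⊆ C := fun h =>
      right_notMem_cycArc hij (hwmem j (hCsub (h (Set.mem_range_self j))))
    obtain ⟨i', j', hij', rfl⟩ := hclass C hC hnw
    have h1 := hsmem i' (hCsub (by simp))
    have h2 := hsmem j' (hCsub (by simp))
    rcases h1 with rfl | rfl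
    · rcases h2 with rfl | rfl
      · exact absurd rfl hij'
      · exact hC
    · -- the complementary arc starts at `j`, which the given arc misses
      exact absurd (hwmem _ (hCsub (Or.inr ⟨_, left_mem_cycArc hij', rfl⟩)))
        (right_notMem_cycArc hij)
  have hspoke : ∀ i j, s i ∈ {s i, s j} ∪ w '' cycArc k i j := fun i j => by simp
  by_cases hdep : M.Indep (Set.range w)
  · right
    refine ⟨k, hk, s, w, hinj, hE, fun C => ?_⟩
    rw [isCircuit_iff']
    have hd : ∀ i, M.Dep (insert (s i) (Set.range w)) := by
      intro i
      rw [← Matroid.not_indep_iff (Set.insert_subset (hsE i) hwE)]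
      intro hind
      have h1 := hind.encard_le_eRank
      rw [Set.encard_insert_of_notMem (by rintro ⟨j, h⟩; exact hsw _ _ h.symm),
        ← hS.encard_eq_eRank, ← Set.image_univ, ← Set.image_univ, hs.encard_image,
        hw.encard_image] at h1
      have h2 : (Set.univ : Set (ZMod k)).encard ≠ ⊤ := Set.encard_ne_top_iff.2 Set.finite_univ
      exact absurd h1 (not_le.2 (ENat.lt_add_one_iff h2 |>.2 le_rfl))
    have hsub : ∀ C, M.IsCircuit C → Set.range w ⊆ C → ∃ i, C = insert (s i) (Set.range w) := by
      intro C hC hwC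
      have hne : ¬ C ⊆ Set.range w := fun h => hC.not_indep (hdep.subset h)
      obtain ⟨x, hxC, hxw⟩ := Set.not_subset.1 hne
      have hxE := hC.subset_ground hxC
      rw [hE] at hxE
      rcases hxE with ⟨i, rfl⟩ | h
      · exact ⟨i, (hC.eq_of_dep_subset (hd i) (Set.insert_subset hxC hwC)).symm⟩
      · exact absurd h hxw
    constructor
    · intro hC
      by_cases hwC : Set.range w ⊆ C
      · exact Or.inl (hsub C hC hwC)
      · exact Or.inr (hclass C hC hwC)
    · rintro (⟨i, rfl⟩ | ⟨i, j, hij, rfl⟩)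
      · obtain ⟨C, hCsub, hC⟩ := (hd i).exists_isCircuit_subset
        have hmem : ∀ x, s x ∈ C → x = i := fun x hx => by
          rcases hCsub hx with h | ⟨j, h⟩
          · exact hs h
          · exact absurd h.symm (hsw _ _)
        by_cases hwC : Set.range w ⊆ C
        · obtain ⟨j, rfl⟩ := hsub C hC hwC
          rw [← hmem j (Set.mem_insert _ _)]
          exact hC
        · obtain ⟨a, b, hab, rfl⟩ := hclass C hC hwC
          exact absurd ((hmem a (by simp)).trans (hmem b (by simp)).symm) hab
      · exact harc i j hij
  · left
    refine ⟨k, hk, s, w, hinj, hE, fun C => ?_⟩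
    rw [isCircuit_iff']
    have hd : M.Dep (Set.range w) := (Matroid.not_indep_iff hwE).1 hdep
    constructor
    · intro hC
      by_cases hwC : Set.range w ⊆ C
      · exact Or.inl (hC.eq_of_dep_subset hd hwC).symm
      · exact Or.inr (hclass C hC hwC)
    · rintro (rfl | ⟨i, j, hij, rfl⟩)
      · obtain ⟨C, hCsub, hC⟩ := hd.exists_isCircuit_subset
        by_cases hwC : Set.range w ⊆ C
        · rwa [hwC.antisymm hCsub]
        · obtain ⟨a, b, hab, rfl⟩ := hclass C hC hwC
          obtain ⟨j, h⟩ := hCsub (hspoke a b)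
          exact absurd h.symm (hsw _ _)
      · exact harc i j hij

end Cyclic

/-! ### A cyclic chain of triangles and triads fills the matroid -/

/-- The union of the first `j` triads `{w i, s (i + 1), w (i + 1)}` of a chain. -/
def chain (s w : ℕ → α) (j : ℕ) : Set α :=
  {a | ∃ i < j, a = w i ∨ a = s (i + 1) ∨ a = w (i + 1)}

/-- Each triad of a chain lowers the rank of the complement by one, by submodularity, because
consecutive triads meet in a single element, which is not a coloop. -/
lemma Good.chain_rk {M : Matroid α} (hM : Good M) {s w : ℕ → α} {k : ℕ}
    (hs : ∀ i < k, ∀ j < k, s i = s j → i = j) (hw : ∀ i < k, ∀ j < k, w i = w j → i = j)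
    (hsw : ∀ i < k, ∀ j < k, s i ≠ w j)
    (htriad : ∀ i, i + 1 < k → M.IsCocircuit {w i, s (i + 1), w (i + 1)}) :
    ∀ j, j < k → M.eRk (M.E \ chain s w j) + j ≤ M.eRank := by
  intro j
  induction j with
  | zero => intro _; simpa using M.eRk_le_eRank _
  | succ j ih =>
    intro hj
    have h1 := ih (by omega)
    have h2 := hM.cocircuit_rk (htriad j hj)
    have h3 := M.eRk_inter_add_eRk_union_le (M.E \ chain s w j) (M.E \ {w j, s (j + 1), w (j + 1)})
    have h4 : M.E \ {w j} ⊆ M.E \ chain s w j ∪ M.E \ {w j, s (j + 1), w (j + 1)} := by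
      rintro x ⟨hx, hxw⟩
      by_contra hcon
      simp only [Set.mem_union, Set.mem_sdiff, hx, true_and, not_or, not_not] at hcon
      obtain ⟨⟨i, hi, hc1⟩, hc2⟩ := hcon
      rcases hc2 with rfl | rfl | rfl
      · exact hxw rfl
      · rcases hc1 with h | h | h
        · exact hsw _ (by omega) _ (by omega) h
        · have := hs _ (by omega) _ (by omega) h; omega
        · exact hsw _ (by omega) _ (by omega) h
      · rcases hc1 with h | h | h
        · have := hw _ (by omega) _ (by omega) h; omega
        · exact hsw _ (by omega) _ (by omega) h.symm
        · have := hw _ (by omega) _ (by omega) h; omega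
    have h5 : M.eRk (M.E \ chain s w (j + 1)) ≤
        M.eRk (M.E \ chain s w j ∩ (M.E \ {w j, s (j + 1), w (j + 1)})) := by
      refine M.eRk_mono ?_
      rintro x ⟨hx, hxc⟩
      refine ⟨⟨hx, ?_⟩, hx, ?_⟩
      · rintro ⟨i, hi, h⟩
        exact hxc ⟨i, by omega, h⟩
      · intro h
        exact hxc ⟨j, by omega, h⟩
    have h6 := M.eRk_mono h4
    rw [hM.coloop (w j) ((htriad j hj).subset_ground (by simp))] at h6
    have hfin : ∀ X, ∃ n : ℕ, M.eRk X = n := fun X =>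
      ⟨_, (ENat.natCast_toNat (ne_top_of_le_ne_top hM.fin (M.eRk_le_eRank X))).symm⟩
    obtain ⟨r, hr⟩ : ∃ n : ℕ, M.eRank = n := ⟨_, (ENat.natCast_toNat hM.fin).symm⟩
    obtain ⟨a, ha⟩ := hfin (M.E \ chain s w (j + 1))
    obtain ⟨b, hb⟩ := hfin (M.E \ chain s w j)
    obtain ⟨c, hc⟩ := hfin (M.E \ {w j, s (j + 1), w (j + 1)})
    have h7 := (add_le_add h5 h6).trans h3
    rw [ha, hb, hc, hr] at h7
    rw [hb, hr] at h1
    rw [hc, hr] at h2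
    rw [ha, hr]
    norm_cast at *
    omega

/-- A cyclic chain of triangles all but one of whose interlacing triples are known to be triads
forces the matroid to be a wheel or a whirl. The union `Y` of the `k - 1` triads is spanned by the
`k` spokes, while its complement has rank at most `r(M) - (k - 1)`; so the complement is the single
element `s 0`, as otherwise it would give a 2-separation. Hence the spokes are a base. -/
lemma Good.core {M : Matroid α} (hM : Good M) {s w : ℕ → α} {k : ℕ} (hk : 2 ≤ k)
    (hs : ∀ i < k, ∀ j < k, s i = s j → i = j) (hw : ∀ i < k, ∀ j < k, w i = w j → i = j)
    (hsw : ∀ i < k, ∀ j < k, s i ≠ w j)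
    (htri : ∀ i, i + 1 < k → M.IsCircuit {s i, w i, s (i + 1)})
    (htri' : M.IsCircuit {s (k - 1), w (k - 1), s 0})
    (htriad : ∀ i, i + 1 < k → M.IsCocircuit {w i, s (i + 1), w (i + 1)}) :
    IsWheel M ∨ IsWhirl M := by
  have hsE : ∀ i < k, s i ∈ M.E := fun i hi => by
    by_cases h : i + 1 < k
    · exact (htri i h).subset_ground (by simp)
    · obtain rfl : i = k - 1 := by omega
      exact htri'.subset_ground (by simp)
  have hwE : ∀ i < k, w i ∈ M.E := fun i hi => by
    by_cases h : i + 1 < k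
    · exact (htri i h).subset_ground (by simp)
    · obtain rfl : i = k - 1 := by omega
      exact htri'.subset_ground (by simp)
  set S : Set α := s '' Set.Iio k with hSdef
  have hsS : ∀ i < k, s i ∈ M.closure S := fun i hi =>
    M.mem_closure_of_mem' ⟨i, hi, rfl⟩ (hsE i hi)
  have hwS : ∀ i < k, w i ∈ M.closure S := fun i hi => by
    by_cases h : i + 1 < k
    · exact mem_closure_of_triangle (htri i h) (hsS i hi) (hsS _ h)
    · obtain rfl : i = k - 1 := by omega
      exact mem_closure_of_triangle htri' (hsS _ hi) (hsS 0 (by omega))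
  have hScard : S.encard = k := by
    have hinjOn : Set.InjOn s (Set.Iio k) := fun i hi j hj h => hs i hi j hj h
    rw [hSdef, hinjOn.encard_image, ← Finset.coe_Iio, Set.encard_coe_eq_coe_finsetCard,
      Nat.card_Iio]
  set Y := chain s w (k - 1) with hYdef
  have hYcl : Y ⊆ M.closure S := by
    rintro x ⟨i, hi, rfl | rfl | rfl⟩
    exacts [hwS _ (by omega), hsS _ (by omega), hwS _ (by omega)]
  have hYE : Y ⊆ M.E := hYcl.trans (M.closure_subset_ground S)
  have hYrk : M.eRk Y ≤ k := by
    refine (M.eRk_mono hYcl).trans ?_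
    rw [M.eRk_closure_eq, ← hScard]
    exact M.eRk_le_encard S
  have hcrk := hM.chain_rk hs hw hsw htriad (k - 1) (by omega)
  rw [← hYdef] at hcrk
  have hs0 : s 0 ∈ M.E \ Y := by
    refine ⟨hsE 0 (by omega), ?_⟩
    rintro ⟨i, hi, h | h | h⟩
    · exact hsw _ (by omega) _ (by omega) h
    · have := hs _ (by omega) _ (by omega) h; omega
    · exact hsw _ (by omega) _ (by omega) h
  have hcomp : M.E \ Y ⊆ {s 0} := by
    intro x hx
    by_contra hne
    refine hM.sep Y hYE (two_le_encard (a := w 0) (b := s 1) ⟨0, by omega, by simp⟩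
      ⟨0, by omega, by simp⟩ (hsw _ (by omega) _ (by omega)).symm)
      (two_le_encard hx hs0 hne) ?_
    calc M.eRk Y + M.eRk (M.E \ Y) ≤ k + M.eRk (M.E \ Y) := by gcongr
      _ = (M.eRk (M.E \ Y) + (k - 1 : ℕ)) + 1 := by
          rw [add_assoc, add_comm]
          congr 1
          norm_cast
          omega
      _ ≤ M.eRank + 1 := by gcongr
  have hsingle : M.E \ Y = {s 0} :=
    hcomp.antisymm (Set.singleton_subset_iff.2 hs0)
  have hrank : (k : ℕ∞) ≤ M.eRank := by
    have h1 : M.eRk {s 0} = 1 := by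
      have := (hM.pair (s 0) (hsE 0 (by omega)) (s 1) (hsE 1 (by omega))
        (fun h => by have := hs _ (by omega) _ (by omega) h; omega)).subset
          (Set.singleton_subset_iff.2 (Set.mem_insert (s 0) _))
      rw [this.eRk_eq_encard, Set.encard_singleton]
    rw [hsingle, h1] at hcrk
    refine le_trans (le_of_eq ?_) hcrk
    norm_cast
    omega
  have hEcl : M.E ⊆ M.closure S := by
    intro x hx
    by_cases hxY : x ∈ Y
    · exact hYcl hxY
    · obtain rfl : x = s 0 := hcomp ⟨hx, hxY⟩
      exact hsS 0 (by omega)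
  have hSE : S ⊆ M.E := by rintro _ ⟨i, hi, rfl⟩; exact hsE i hi
  have hSind : M.Indep S := by
    refine Matroid.IsRkFinite.indep_of_encard_le_eRk
      (Matroid.isRkFinite_of_finite M ((Set.finite_Iio k).image s)) ?_
    have h1 : M.eRank ≤ M.eRk S := by
      rw [← M.eRk_closure_eq, ← M.eRk_ground]
      exact M.eRk_mono hEcl
    rw [hScard]
    exact hrank.trans h1
  have hSbase : M.IsBase S :=
    hSind.isBase_of_spanning ((Matroid.spanning_iff_ground_subset_closure hSE).2 hEcl)
  have : NeZero k := ⟨by omega⟩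
  have hlt : ∀ i : ZMod k, i.val < k := ZMod.val_lt
  have hrange : ∀ f : ℕ → α, Set.range (fun i : ZMod k => f i.val) = f '' Set.Iio k := by
    intro f
    ext x
    constructor
    · rintro ⟨i, rfl⟩
      exact ⟨i.val, hlt i, rfl⟩
    · rintro ⟨i, hi, rfl⟩
      exact ⟨(i : ZMod k), by simp only [ZMod.val_natCast_of_lt hi]⟩
  refine wheel_or_whirl (k := k) (s := fun i => s i.val) (w := fun i => w i.val) hk ?_ ?_ ?_ ?_
  · rintro (i | i) (j | j) h
    · exact congrArg _ (ZMod.val_injective k (hs _ (hlt i) _ (hlt j) h))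
    · exact absurd h (hsw _ (hlt i) _ (hlt j))
    · exact absurd h.symm (hsw _ (hlt j) _ (hlt i))
    · exact congrArg _ (ZMod.val_injective k (hw _ (hlt i) _ (hlt j) h))
  · rw [hrange, hrange]
    apply Set.Subset.antisymm
    · intro x hx
      by_cases hxY : x ∈ Y
      · obtain ⟨i, hi, rfl | rfl | rfl⟩ := hxY
        · exact Or.inr ⟨i, by simp only [Set.mem_Iio]; omega, rfl⟩
        · exact Or.inl ⟨i + 1, by simp only [Set.mem_Iio]; omega, rfl⟩
        · exact Or.inr ⟨i + 1, by simp only [Set.mem_Iio]; omega, rfl⟩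
      · obtain rfl : x = s 0 := hcomp ⟨hx, hxY⟩
        exact Or.inl ⟨0, by simp only [Set.mem_Iio]; omega, rfl⟩
    · rintro x (⟨i, hi, rfl⟩ | ⟨i, hi, rfl⟩)
      exacts [hsE i hi, hwE i hi]
  · rw [hrange]
    exact hSbase
  · intro i
    have : Fact (1 < k) := ⟨by omega⟩
    by_cases h : i.val + 1 < k
    · have hv : (i + 1).val = i.val + 1 := by
        rw [ZMod.val_add, ZMod.val_one, Nat.mod_eq_of_lt h]
      simp only [hv]
      exact htri _ h
    · have hi : i.val = k - 1 := by have := hlt i; omega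
      have hv : (i + 1).val = 0 := by
        rw [ZMod.val_add, ZMod.val_one, hi, Nat.sub_add_cancel (by omega), Nat.mod_self]
      simp only [hv, hi]
      exact htri'

/-- A triple that is both a triangle and a triad occurs only in a four-element matroid, which is
then a wheel or a whirl of rank 2. -/
lemma Good.triangle_triad {M : Matroid α} (hM : Good M) (hcard : 4 ≤ M.E.encard) {a b c : α}
    (hab : a ≠ b) (hac : a ≠ c) (hbc : b ≠ c) (h1 : M.IsCircuit {a, b, c})
    (h2 : M.IsCocircuit {a, b, c}) : IsWheel M ∨ IsWhirl M := by
  have hE := h1.subset_ground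
  have ha : a ∈ M.E := hE (by simp)
  have hb : b ∈ M.E := hE (by simp)
  have hc : c ∈ M.E := hE (by simp)
  obtain ⟨d, hd, hdn⟩ : ∃ d ∈ M.E, d ∉ ({a, b, c} : Set α) := by
    by_contra! hcon
    have := hcard.trans ((Set.encard_le_encard hcon).trans (encard_triple_le a b c))
    norm_num at this
  have hrk := circuit_rk_le h1
  have hcomp : M.E \ {a, b, c} ⊆ {d} := by
    intro x hx
    by_contra hne
    refine hM.sep _ hE (two_le_encard (a := a) (b := b) (by simp) (by simp) hab)
      (two_le_encard hx ⟨hd, hdn⟩ hne) ?_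
    calc M.eRk {a, b, c} + M.eRk (M.E \ {a, b, c}) ≤ 2 + M.eRk (M.E \ {a, b, c}) := by gcongr
      _ = (M.eRk (M.E \ {a, b, c}) + 1) + 1 := by
          rw [add_comm, add_assoc, one_add_one_eq_two]
      _ ≤ M.eRank + 1 := by gcongr; exact hM.cocircuit_rk h2
  have hr2 : M.eRank ≤ 2 := by
    rw [← hM.coloop d hd]
    refine (M.eRk_mono ?_).trans hrk
    rintro x ⟨hx, hxd⟩
    by_contra hxn
    exact hxd (hcomp ⟨hx, hxn⟩)
  simp only [Set.mem_insert_iff, Set.mem_singleton_iff, not_or] at hdn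
  obtain ⟨hda, hdb, hdc⟩ := hdn
  refine hM.core (k := 2) (s := fun i => if i = 0 then d else b)
    (w := fun i => if i = 0 then a else c) le_rfl ?_ ?_ ?_ ?_ ?_ ?_
  · intro i hi j hj
    interval_cases i <;> interval_cases j <;> simp_all [eq_comm]
  · intro i hi j hj
    interval_cases i <;> interval_cases j <;> simp_all [eq_comm]
  · intro i hi j hj
    interval_cases i <;> interval_cases j <;> simp_all [eq_comm]
  · intro i hi
    obtain rfl : i = 0 := by omega
    exact hM.triangle_of_rk hd ha hb hda hdb hab ((M.eRk_le_eRank _).trans hr2)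
  · exact hM.triangle_of_rk hb hc hd hbc (Ne.symm hdb) (Ne.symm hdc)
      ((M.eRk_le_eRank _).trans hr2)
  · intro i hi
    obtain rfl : i = 0 := by omega
    exact h2

/-- If the rim of a five-element fan with rim elements at both ends is a triangle, then the
matroid has exactly six elements, and the sixth one `f` is a missing spoke that closes the fan
into a wheel or a whirl of rank 3. -/
lemma Good.rim_triangle {M : Matroid α} (hM : Good M) {e : ℕ → α}
    (he : ∀ i < 5, ∀ j < 5, e i = e j → i = j)
    (h1 : M.IsCocircuit {e 0, e 1, e 2}) (h2 : M.IsCircuit {e 1, e 2, e 3})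
    (h3 : M.IsCocircuit {e 2, e 3, e 4}) (h4 : M.IsCircuit {e 0, e 2, e 4}) :
    IsWheel M ∨ IsWhirl M := by
  have ne : ∀ i < 5, ∀ j < 5, i ≠ j → e i ≠ e j := fun i hi j hj hij h => hij (he i hi j hj h)
  have m0 : e 0 ∈ M.E := h1.subset_ground (by simp)
  have m1 : e 1 ∈ M.E := h1.subset_ground (by simp)
  have m2 : e 2 ∈ M.E := h1.subset_ground (by simp)
  have m3 : e 3 ∈ M.E := h3.subset_ground (by simp)
  have m4 : e 4 ∈ M.E := h3.subset_ground (by simp)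
  set Y : Set α := {e 0, e 1, e 2, e 3, e 4} with hY
  have hYE : Y ⊆ M.E := by
    rintro x (rfl | rfl | rfl | rfl | rfl) <;> assumption
  have hYrk : M.eRk Y ≤ 3 := by
    have hsub : ({e 0, e 1, e 2} : Set α) ⊆ M.E := h1.subset_ground
    have c0 : e 0 ∈ M.closure {e 0, e 1, e 2} := M.subset_closure _ hsub (by simp)
    have c1 : e 1 ∈ M.closure {e 0, e 1, e 2} := M.subset_closure _ hsub (by simp)
    have c2 : e 2 ∈ M.closure {e 0, e 1, e 2} := M.subset_closure _ hsub (by simp)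
    have c3 : e 3 ∈ M.closure {e 0, e 1, e 2} := mem_closure_of_triangle (x := e 1) (z := e 2)
      (by convert! h2 using 1; ext; simp; tauto) c1 c2
    have c4 : e 4 ∈ M.closure {e 0, e 1, e 2} := mem_closure_of_triangle (x := e 0) (z := e 2)
      (by convert! h4 using 1; ext; simp; tauto) c0 c2
    calc M.eRk Y ≤ M.eRk (M.closure {e 0, e 1, e 2}) := M.eRk_mono (by
          rintro x (rfl | rfl | rfl | rfl | rfl) <;> assumption)
      _ = M.eRk {e 0, e 1, e 2} := M.eRk_closure_eq _
      _ ≤ 3 := (M.eRk_le_encard _).trans (encard_triple_le _ _ _)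
  have hc1 := hM.cocircuit_rk h1
  have hc3 := hM.cocircuit_rk h3
  -- otherwise `{e 0, e 2, e 4}` and `{e 1, e 3}` would form a 2-separation
  obtain ⟨f, hfE, hfY⟩ : ∃ f ∈ M.E, f ∉ Y := by
    by_contra! hcon
    have hpair : M.eRk {e 3, e 4} = 2 := by
      rw [(hM.pair _ m3 _ m4 (ne 3 (by omega) 4 (by omega) (by omega))).eRk_eq_encard,
        Set.encard_pair (ne 3 (by omega) 4 (by omega) (by omega))]
    have hsub34 : ({e 3, e 4} : Set α) ⊆ M.E \ {e 0, e 1, e 2} := by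
      rintro x (rfl | rfl)
      · refine ⟨m3, ?_⟩
        rintro (h | h | h) <;> have := he _ (by omega) _ (by omega) h <;> omega
      · refine ⟨m4, ?_⟩
        rintro (h | h | h) <;> have := he _ (by omega) _ (by omega) h <;> omega
    have h3r : 3 ≤ M.eRank := by
      refine le_trans ?_ hc1
      have := M.eRk_mono hsub34
      rw [hpair] at this
      calc (3 : ℕ∞) = 2 + 1 := by norm_num
        _ ≤ _ := by gcongr
    have hsub13 : M.E \ {e 0, e 2, e 4} ⊆ {e 1, e 3} := by
      rintro x ⟨hx, hxn⟩
      have := hcon x hx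
      simp only [hY, Set.mem_insert_iff, Set.mem_singleton_iff] at this hxn ⊢
      tauto
    refine hM.sep {e 0, e 2, e 4} h4.subset_ground
      (two_le_encard (a := e 0) (b := e 2) (by simp) (by simp)
        (ne 0 (by omega) 2 (by omega) (by omega)))
      (two_le_encard (a := e 1) (b := e 3) ⟨m1, ?_⟩ ⟨m3, ?_⟩
        (ne 1 (by omega) 3 (by omega) (by omega))) ?_
    · rintro (h | h | h) <;> have := he _ (by omega) _ (by omega) h <;> omega
    · rintro (h | h | h) <;> have := he _ (by omega) _ (by omega) h <;> omega
    · calc M.eRk {e 0, e 2, e 4} + M.eRk (M.E \ {e 0, e 2, e 4}) ≤ 2 + 2 := by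
            gcongr
            · exact circuit_rk_le h4
            · exact (M.eRk_mono hsub13).trans ((M.eRk_le_encard _).trans (encard_pair_le _ _))
        _ = 3 + 1 := by norm_num
        _ ≤ M.eRank + 1 := by gcongr
  have hfne : ∀ i < 5, f ≠ e i := by
    intro i hi h
    apply hfY
    interval_cases i <;> simp [hY, h]
  -- labels as in a wheel: spokes `f, e 1, e 3` and rim elements `e 0, e 2, e 4`
  set s : ℕ → α := fun i => if i = 0 then f else e (2 * i - 1) with hs
  set w : ℕ → α := fun i => e (2 * i) with hw
  have hsinj : ∀ i < 3, ∀ j < 3, s i = s j → i = j := by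
    intro i hi j hj h
    simp only [hs] at h
    split_ifs at h with h1 h2 h2
    · omega
    · exact absurd h (hfne _ (by omega))
    · exact absurd h.symm (hfne _ (by omega))
    · have := he _ (by omega) _ (by omega) h; omega
  have hwinj : ∀ i < 3, ∀ j < 3, w i = w j → i = j := by
    intro i hi j hj h
    have := he _ (by omega) _ (by omega) h; omega
  have hsw : ∀ i < 3, ∀ j < 3, s i ≠ w j := by
    intro i hi j hj h
    simp only [hs] at h
    split_ifs at h with h1
    · exact hfne _ (by omega) h
    · have := he _ (by omega) _ (by omega) h; omega
  have htriad : ∀ i, i + 1 < 3 → M.IsCocircuit {w i, s (i + 1), w (i + 1)} := by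
    intro i hi
    have : i < 2 := by omega
    interval_cases i
    · exact h1
    · exact h3
  have hchain : M.E \ Y ⊆ M.E \ chain s w 2 := by
    rintro x ⟨hx, hxY⟩
    refine ⟨hx, ?_⟩
    rintro ⟨i, hi, h⟩
    apply hxY
    interval_cases i <;> simp [hs, hw] at h <;> simp [hY] <;> tauto
  have hcrk := hM.chain_rk hsinj hwinj hsw htriad 2 (by omega)
  have hcomp : M.E \ Y ⊆ {f} := by
    intro x hx
    by_contra hne
    refine hM.sep Y hYE (two_le_encard (a := e 0) (b := e 1) (by simp [hY]) (by simp [hY])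
      (ne 0 (by omega) 1 (by omega) (by omega))) (two_le_encard hx ⟨hfE, hfY⟩ hne) ?_
    calc M.eRk Y + M.eRk (M.E \ Y) ≤ 3 + M.eRk (M.E \ chain s w 2) :=
          add_le_add hYrk (M.eRk_mono hchain)
      _ = (M.eRk (M.E \ chain s w 2) + (2 : ℕ)) + 1 := by
          rw [add_comm, add_assoc]; norm_num
      _ ≤ M.eRank + 1 := by gcongr
  have hr3 : M.eRank ≤ 2 + 1 := by
    rw [← hM.coloop f hfE]
    refine (M.eRk_mono ?_).trans (hYrk.trans (by norm_num))
    rintro x ⟨hx, hxf⟩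
    by_contra hxn
    exact hxf (hcomp ⟨hx, hxn⟩)
  have hc1' : M.eRk (M.E \ {e 0, e 1, e 2}) ≤ 2 :=
    (ENat.add_le_add_iff_right (by simp)).1 (hc1.trans hr3)
  have hc3' : M.eRk (M.E \ {e 2, e 3, e 4}) ≤ 2 :=
    (ENat.add_le_add_iff_right (by simp)).1 (hc3.trans hr3)
  have t1 : M.IsCircuit {f, e 0, e 1} := by
    refine hM.triangle_of_rk hfE m0 m1 (hfne 0 (by omega)) (hfne 1 (by omega))
      (ne 0 (by omega) 1 (by omega) (by omega)) ((M.eRk_mono ?_).trans hc3')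
    rintro x (rfl | rfl | rfl)
    · refine ⟨hfE, ?_⟩
      rintro (h | h | h) <;> exact hfne _ (by omega) h
    · refine ⟨m0, ?_⟩
      rintro (h | h | h) <;> have := he _ (by omega) _ (by omega) h <;> omega
    · refine ⟨m1, ?_⟩
      rintro (h | h | h) <;> have := he _ (by omega) _ (by omega) h <;> omega
  have t2 : M.IsCircuit {e 3, e 4, f} := by
    refine hM.triangle_of_rk m3 m4 hfE (ne 3 (by omega) 4 (by omega) (by omega))
      (hfne 3 (by omega)).symm (hfne 4 (by omega)).symm ((M.eRk_mono ?_).trans hc1')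
    rintro x (rfl | rfl | rfl)
    · refine ⟨m3, ?_⟩
      rintro (h | h | h) <;> have := he _ (by omega) _ (by omega) h <;> omega
    · refine ⟨m4, ?_⟩
      rintro (h | h | h) <;> have := he _ (by omega) _ (by omega) h <;> omega
    · refine ⟨hfE, ?_⟩
      rintro (h | h | h) <;> exact hfne _ (by omega) h
  refine hM.core (k := 3) (by omega) hsinj hwinj hsw ?_ t2 htriad
  intro i hi
  have : i < 2 := by omega
  interval_cases i
  · exact t1
  · exact h2


/-! ### Triangles on the index set of a fan -/

/-- The combinatorial constraints satisfied by the triangles inside a fan with `n` elements.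
`P x y z` says that the fan elements of indices `x, y, z` form a triangle, and the index `i`
carries a spoke element iff `i + c` is even. -/
structure FanSys (n c : ℕ) (P : ℕ → ℕ → ℕ → Prop) : Prop where
  range : ∀ {x y z}, P x y z → 1 ≤ x ∧ x ≤ n ∧ x ≠ y ∧ x ≠ z
  swap : ∀ {x y z}, P x y z → P y x z
  rot : ∀ {x y z}, P x y z → P x z y
  /-- a triangle and the triad centred at `i` do not meet in a single element -/
  orth : ∀ {i x y z}, (i + c) % 2 = 0 → 1 < i → i < n → P x y z → i ≤ x + 1 → x ≤ i + 1 →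
    (i ≤ y + 1 ∧ y ≤ i + 1) ∨ (i ≤ z + 1 ∧ z ≤ i + 1)
  /-- no triangle is a triad -/
  notTriad : ∀ {i}, (i + c) % 2 = 0 → 1 < i → i < n → ¬ P i (i - 1) (i + 1)
  exch : ∀ {x y z w}, P x y z → P x y w → z ≠ w → P x z w
  tri : ∀ {i}, (i + c) % 2 = 0 → 1 ≤ i → i + 2 ≤ n → P i (i + 1) (i + 2)
  /-- the fan does not close up cyclically, its first element being a spoke element -/
  first : (1 + c) % 2 = 0 → (n + c) % 2 = 1 → 6 ≤ n → ¬ P (n - 1) n 1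
  /-- the fan does not close up cyclically, its last element being a spoke element -/
  last : (1 + c) % 2 = 1 → (n + c) % 2 = 0 → 6 ≤ n → ¬ P 2 1 n
  rim : ∀ {i}, (i + c) % 2 = 1 → 1 ≤ i → i + 4 ≤ n → ¬ P i (i + 2) (i + 4)

namespace FanSys

variable {n c : ℕ} {P : ℕ → ℕ → ℕ → Prop}

/-- The constraints are invariant under reversing the fan. -/
lemma mirror (h : FanSys n c P) :
    FanSys n (n + 1 + c) (fun x y z => P (n + 1 - x) (n + 1 - y) (n + 1 - z)) where
  range := by
    intro x y z hp
    have := h.range hp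
    have := h.range (h.swap hp)
    have := h.range (h.swap (h.rot hp))
    omega
  swap := h.swap
  rot := h.rot
  orth := by
    intro i x y z hi h1 h2 hp h3 h4
    have a1 := h.range hp
    have a2 := h.range (h.swap hp)
    have a3 := h.range (h.swap (h.rot hp))
    have := h.orth (i := n + 1 - i) (by omega) (by omega) (by omega) hp (by omega) (by omega)
    omega
  notTriad := by
    intro i hi h1 h2 hp
    refine h.notTriad (i := n + 1 - i) (by omega) (by omega) (by omega) (h.rot ?_)
    convert hp using 1 <;> omega
  exch := by
    intro x y z w h1 h2 hzw
    have := h.range (h.swap (h.rot h1))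
    have := h.range (h.swap (h.rot h2))
    exact h.exch h1 h2 (by omega)
  tri := by
    intro i hi h1 h2
    have := h.rot (h.swap (h.rot (h.tri (i := n + 1 - (i + 2)) (by omega) (by omega) (by omega))))
    convert this using 1 <;> omega
  first := by
    intro h1 h2 h3 hp
    refine h.last (by omega) (by omega) (by omega) ?_
    convert hp using 1 <;> omega
  last := by
    intro h1 h2 h3 hp
    refine h.first (by omega) (by omega) (by omega) ?_
    convert hp using 1 <;> omega
  rim := by
    intro i hi h1 h2 hp
    refine h.rim (i := n + 1 - (i + 4)) (by omega) (by omega) (by omega)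
      (h.rot (h.swap (h.rot ?_)))
    convert hp using 1 <;> omega

/-- A triangle containing an interior spoke index `i` and its successor is the fan triangle
starting at `i`. -/
lemma succ (h : FanSys n c P) {i x : ℕ} (hi : (i + c) % 2 = 0) (h1 : 1 < i) (h2 : i + 1 ≤ n)
    (hp : P i (i + 1) x) : i + 2 ≤ n ∧ x = i + 2 := by
  have hx := h.range (h.swap (h.rot hp))
  have hx1 : x ≠ i - 1 := by
    rintro rfl
    exact h.notTriad hi h1 (by omega) (h.rot hp)
  by_cases hn : i + 2 ≤ n
  · refine ⟨hn, ?_⟩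
    by_contra hne
    have hq := h.exch hp (h.tri hi (by omega) hn) hne
    have := h.orth hi h1 (by omega) hq (by omega) (by omega)
    omega
  exfalso
  obtain rfl : n = i + 1 := by omega
  -- the three indices are now `x < i - 1` and the last two indices of the fan
  rcases Nat.eq_or_lt_of_le (show x ≤ i - 2 by omega) with rfl | hlt
  · have ht := h.tri (i := i - 2) (by omega) (by omega) (by omega)
    rw [show i - 2 + 2 = i by omega, show i - 2 + 1 = i - 1 by omega] at ht
    -- `{i, i-2, i+1}` and `{i, i-2, i-1}` exchange to `{i, i+1, i-1}`
    have hq := h.exch (h.rot hp) (h.swap (h.rot ht)) (by omega)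
    exact h.notTriad hi h1 (by omega) (h.rot hq)
  · by_cases hxs : (x + c) % 2 = 0
    · by_cases hx1 : x = 1
      · subst hx1
        exact h.first hxs (by omega) (by omega) hp
      · have := h.orth hxs (by omega) (by omega) (h.swap (h.rot hp)) (by omega) (by omega)
        omega
    · have := h.orth (i := x + 1) (by omega) (by omega) (by omega) (h.swap (h.rot hp))
        (by omega) (by omega)
      omega

lemma pred (h : FanSys n c P) {i x : ℕ} (hi : (i + c) % 2 = 0) (h1 : 1 < i) (h2 : i + 1 ≤ n)
    (hp : P i (i - 1) x) : 3 ≤ i ∧ x = i - 2 := by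
  have hx := h.range (h.swap (h.rot hp))
  have := h.mirror.succ (i := n + 1 - i) (x := n + 1 - x) (by omega) (by omega) (by omega)
    (by convert hp using 1 <;> omega)
  omega

/-- `{x, y, z} = {i, i + 1, i + 2}` for a spoke index `i`, in terms of membership. -/
def Consec (n c x y z : ℕ) : Prop :=
  ∃ i, 1 ≤ i ∧ i + 2 ≤ n ∧ (i + c) % 2 = 0 ∧
    ∀ j, (j = x ∨ j = y ∨ j = z) ↔ (j = i ∨ j = i + 1 ∨ j = i + 2)

lemma Consec.swap {x y z : ℕ} (h : Consec n c x y z) : Consec n c y x z := by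
  obtain ⟨i, h1, h2, h3, h4⟩ := h
  exact ⟨i, h1, h2, h3, fun j => by rw [← h4]; tauto⟩

lemma Consec.rot {x y z : ℕ} (h : Consec n c x y z) : Consec n c x z y := by
  obtain ⟨i, h1, h2, h3, h4⟩ := h
  exact ⟨i, h1, h2, h3, fun j => by rw [← h4]; tauto⟩

lemma consec_of_spoke (h : FanSys n c P) {x y z : ℕ} (hx : (x + c) % 2 = 0) (h1 : 1 < x)
    (h2 : x < n) (hp : P x y z) : Consec n c x y z := by
  have key : ∀ {y z}, P x y z → x ≤ y + 1 → y ≤ x + 1 → Consec n c x y z := by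
    intro y z hp h3 h4
    have := h.range hp
    rcases (show y = x + 1 ∨ y = x - 1 by omega) with rfl | rfl
    · obtain ⟨h5, rfl⟩ := h.succ hx h1 (by omega) hp
      exact ⟨x, by omega, h5, hx, fun j => by omega⟩
    · obtain ⟨h5, rfl⟩ := h.pred hx h1 (by omega) hp
      exact ⟨x - 2, by omega, by omega, by omega, fun j => by omega⟩
  rcases h.orth hx h1 h2 hp (by omega) (by omega) with h3 | h3
  · exact key hp h3.1 h3.2
  · exact (key (h.rot hp) h3.1 h3.2).rot

lemma consec_sorted (h : FanSys n c P) {x y z : ℕ} (hp : P x y z) (hxy : x < y) (hyz : y < z) :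
    Consec n c x y z := by
  have ax := h.range hp
  have az := h.range (h.swap (h.rot hp))
  by_cases hy : (y + c) % 2 = 0
  · exact (h.consec_of_spoke hy (by omega) (by omega) (h.swap hp)).swap
  by_cases hx : (x + c) % 2 = 0 ∧ 1 < x
  · exact h.consec_of_spoke hx.1 hx.2 (by omega) hp
  by_cases hz : (z + c) % 2 = 0 ∧ z < n
  · exact (h.consec_of_spoke hz.1 (by omega) hz.2 (h.swap (h.rot hp))).swap.rot
  -- the middle index is a rim index, and the outer ones are rim indices or ends of the fan
  have hzy : y + 2 ≤ n → z = y + 2 := by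
    intro hn
    have := h.orth (i := y + 1) (by omega) (by omega) (by omega) (h.swap hp) (by omega) (by omega)
    have : z ≠ y + 1 := by omega
    omega
  have hxy' : 3 ≤ y → x = y - 2 := by
    intro hn
    have := h.orth (i := y - 1) (by omega) (by omega) (by omega) (h.swap hp) (by omega) (by omega)
    have : x ≠ y - 1 := by omega
    omega
  by_cases hn : y + 2 ≤ n
  · obtain rfl := hzy hn
    by_cases h3 : 3 ≤ y
    · obtain rfl := hxy' h3
      exfalso
      refine h.rim (i := y - 2) (by omega) (by omega) (by omega) ?_
      convert hp using 1 <;> omega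
    · obtain rfl : y = 2 := by omega
      obtain rfl : x = 1 := by omega
      exfalso
      have ht := h.tri (i := 1) (by omega) (by omega) (by omega)
      have hq := h.exch (h.swap hp) (h.swap ht) (by omega)
      -- `{2, 4, 3}` would be both a triangle and a triad
      exact h.notTriad (i := 3) (by omega) (by omega) (by omega) (h.swap (h.rot hq))
  · obtain rfl : z = y + 1 := by omega
    by_cases h3 : 3 ≤ y
    · obtain rfl := hxy' h3
      exfalso
      have ht := h.tri (i := y - 1) (by omega) (by omega) (by omega)
      rw [show y - 1 + 1 = y by omega, show y - 1 + 2 = y + 1 by omega] at ht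
      have hq := h.exch (h.rot (h.swap hp)) (h.rot (h.swap ht)) (by omega)
      refine h.notTriad (i := y - 1) (by omega) (by omega) (by omega) ?_
      rw [show y - 1 - 1 = y - 2 by omega, show y - 1 + 1 = y by omega]
      exact h.rot (h.swap (h.rot hq))
    · obtain rfl : y = 2 := by omega
      obtain rfl : x = 1 := by omega
      exact ⟨1, by omega, by omega, by omega, fun j => by omega⟩

/-- Every triangle inside the fan consists of three consecutive indices starting at a spoke. -/
lemma consec (h : FanSys n c P) {x y z : ℕ} (hp : P x y z) : Consec n c x y z := by
  have ax := h.range hp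
  have ay := h.range (h.swap hp)
  rcases lt_or_gt_of_ne ax.2.2.1 with h1 | h1 <;> rcases lt_or_gt_of_ne ax.2.2.2 with h2 | h2 <;>
    rcases lt_or_gt_of_ne ay.2.2.2 with h3 | h3
  · exact h.consec_sorted hp h1 h3
  · exact (h.consec_sorted (h.rot hp) h2 h3).rot
  · omega
  · exact (h.consec_sorted (h.swap (h.rot hp)) h2 h1).swap.rot
  · exact (h.consec_sorted (h.swap hp) h1 h2).swap
  · omega
  · exact (h.consec_sorted (h.rot (h.swap hp)) h3 h2).rot.swap
  · exact (h.consec_sorted (h.rot (h.swap (h.rot hp))) h3 h1).rot.swap.rot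

end FanSys

/-- The fan elements of indices `x, y, z` form a triangle. -/
def FanTri (M : Matroid α) (n : ℕ) (e : ℕ → α) (x y z : ℕ) : Prop :=
  ((1 ≤ x ∧ x ≤ n) ∧ (1 ≤ y ∧ y ≤ n) ∧ (1 ≤ z ∧ z ≤ n) ∧ x ≠ y ∧ x ≠ z ∧ y ≠ z) ∧
    M.IsCircuit {e x, e y, e z}

/-- The constraints hold in a 3-connected matroid that is neither a wheel nor a whirl; each
negative one excludes a configuration that forces a wheel or a whirl. -/
lemma fanTri_fanSys {M : Matroid α} (hM : Good M) (hcard : 4 ≤ M.E.encard)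
    (hW : ¬ (IsWheel M ∨ IsWhirl M)) {n c : ℕ} {e : ℕ → α}
    (he : ∀ i j, 1 ≤ i → i ≤ n → 1 ≤ j → j ≤ n → e i = e j → i = j)
    (htri : ∀ i, (i + c) % 2 = 0 → 1 ≤ i → i + 2 ≤ n → M.IsCircuit {e i, e (i + 1), e (i + 2)})
    (htriad : ∀ i, (i + c) % 2 = 1 → 1 ≤ i → i + 2 ≤ n →
      M.IsCocircuit {e i, e (i + 1), e (i + 2)}) :
    FanSys n c (FanTri M n e) where
  range := fun h => by have := h.1; omega
  swap := fun h => ⟨by have := h.1; omega, by rw [Set.insert_comm]; exact h.2⟩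
  rot := fun h => ⟨by have := h.1; omega, by rw [Set.pair_comm]; exact h.2⟩
  orth := by
    intro i x y z hi h1 h2 hp h3 h4
    have hr := hp.1
    have hK := htriad (i - 1) (by omega) (by omega) (by omega)
    by_contra hcon
    apply hp.2.inter_isCocircuit_ne_singleton hK (e := e x)
    have hmem : ∀ j, 1 ≤ j → j ≤ n →
        (e j ∈ ({e (i - 1), e (i - 1 + 1), e (i - 1 + 2)} : Set α) ↔ i ≤ j + 1 ∧ j ≤ i + 1) := by
      intro j hj1 hj2
      simp only [Set.mem_insert_iff, Set.mem_singleton_iff]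
      constructor
      · rintro (h | h | h)
        all_goals
          have := he _ _ (by omega) (by omega) (by omega) (by omega) h
          omega
      · intro hj
        rcases (show j = i - 1 ∨ j = i - 1 + 1 ∨ j = i - 1 + 2 by omega) with h | h | h <;>
          simp [← h]
    ext a
    simp only [Set.mem_inter_iff, Set.mem_singleton_iff]
    constructor
    · rintro ⟨ha, hb⟩
      rcases ha with rfl | rfl | rfl
      · rfl
      · exact absurd ((hmem y (by omega) (by omega)).1 hb) (by omega)
      · exact absurd ((hmem z (by omega) (by omega)).1 hb) (by omega)
    · rintro rfl
      exact ⟨by simp, (hmem x (by omega) (by omega)).2 ⟨h3, h4⟩⟩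
  notTriad := by
    intro i hi h1 h2 hp
    have hr := hp.1
    have hK := htriad (i - 1) (by omega) (by omega) (by omega)
    rw [show i - 1 + 1 = i by omega, show i - 1 + 2 = i + 1 by omega, Set.insert_comm] at hK
    refine hW (hM.triangle_triad hcard ?_ ?_ ?_ hp.2 hK)
    all_goals
      intro h
      have := he _ _ (by omega) (by omega) (by omega) (by omega) h
      omega
  exch := by
    intro x y z w h1 h2 hzw
    have hr1 := h1.1
    have hr2 := h2.1
    refine ⟨by omega, hM.exchange h1.2 h2.2 ?_ ?_ ?_⟩
    all_goals
      intro h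
      have := he _ _ (by omega) (by omega) (by omega) (by omega) h
      omega
  tri := fun hi h1 h2 => ⟨by omega, htri _ hi h1 h2⟩
  first := by
    intro h1 h2 h6 hp
    refine hW (hM.core (s := fun j => e (2 * j + 1)) (w := fun j => e (2 * j + 2))
      (k := n / 2) (by omega) ?_ ?_ ?_ ?_ ?_ ?_)
    · intro i hi j hj h
      have := he _ _ (by omega) (by omega) (by omega) (by omega) h
      omega
    · intro i hi j hj h
      have := he _ _ (by omega) (by omega) (by omega) (by omega) h
      omega
    · intro i hi j hj h
      have := he _ _ (by omega) (by omega) (by omega) (by omega) h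
      omega
    · intro i hi
      exact htri (2 * i + 1) (by omega) (by omega) (by omega)
    · have h := hp.2
      rw [show n - 1 = 2 * (n / 2 - 1) + 1 by omega] at h
      nth_rewrite 2 [show n = 2 * (n / 2 - 1) + 2 by omega] at h
      exact h
    · intro i hi
      exact htriad (2 * i + 2) (by omega) (by omega) (by omega)
  last := by
    intro h1 h2 h6 hp
    refine hW (hM.core (s := fun j => e (n - 2 * j)) (w := fun j => e (n - 2 * j - 1))
      (k := n / 2) (by omega) ?_ ?_ ?_ ?_ ?_ ?_)
    · intro i hi j hj h
      have := he _ _ (by omega) (by omega) (by omega) (by omega) h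
      omega
    · intro i hi j hj h
      have := he _ _ (by omega) (by omega) (by omega) (by omega) h
      omega
    · intro i hi j hj h
      have := he _ _ (by omega) (by omega) (by omega) (by omega) h
      omega
    · intro i hi
      have h := htri (n - 2 * i - 2) (by omega) (by omega) (by omega)
      rw [show n - 2 * i - 2 + 1 = n - 2 * i - 1 by omega,
        show n - 2 * i - 2 + 2 = n - 2 * i by omega] at h
      simp only [show n - 2 * (i + 1) = n - 2 * i - 2 by omega]
      rwa [Set.insert_comm, Set.pair_comm, Set.insert_comm]
    · have h := hp.2
      simpa only [show n - 2 * (n / 2 - 1) = 2 by omega, Nat.mul_zero, Nat.sub_zero] using h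
    · intro i hi
      have h := htriad (n - 2 * i - 3) (by omega) (by omega) (by omega)
      rw [show n - 2 * i - 3 + 1 = n - 2 * i - 2 by omega,
        show n - 2 * i - 3 + 2 = n - 2 * i - 1 by omega] at h
      simp only [show n - 2 * (i + 1) = n - 2 * i - 2 by omega,
        show n - 2 * i - 2 - 1 = n - 2 * i - 3 by omega]
      rwa [Set.insert_comm, Set.pair_comm, Set.insert_comm]
  rim := by
    intro i hi h1 h2 hp
    refine hW (hM.rim_triangle (e := fun m => e (i + m)) ?_ ?_ ?_ ?_ ?_)
    · intro a ha b hb h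
      have := he _ _ (by omega) (by omega) (by omega) (by omega) h
      omega
    · exact htriad i hi h1 (by omega)
    · exact htri (i + 1) (by omega) (by omega) (by omega)
    · exact htriad (i + 2) (by omega) (by omega) (by omega)
    · exact hp.2

end FanTriangle

/-- Any triangle contained in a fan of a 3-connected matroid (with at least four
elements, and neither a wheel nor a whirl) consists of three consecutive fan elements
starting at a spoke element. -/
theorem statement13 (M : Matroid α) (hM3 : ThreeConn M) (hcard : 4 ≤ M.E.encard)
    (hW : ¬ IsWheel M) (hWh : ¬ IsWhirl M)
    (b : Bool) (n : ℕ) (e : ℕ → α) (hfan : IsFanFun M b n e)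
    (T : Set α) (hT : IsTriangle M T) (hTsub : T ⊆ fanSet n e) :
    ∃ i, 1 ≤ i ∧ i + 2 ≤ n ∧ T = {e i, e (i+1), e (i+2)} ∧ posBool b i = true := by
  obtain ⟨_, he, _, htt⟩ := hfan
  obtain ⟨c, hc⟩ : ∃ c : ℕ, ∀ i, posBool b i = true ↔ (i + c) % 2 = 0 := by
    cases b
    · exact ⟨0, fun i => by unfold posBool; split_ifs <;> simp <;> omega⟩
    · exact ⟨1, fun i => by unfold posBool; split_ifs <;> simp <;> omega⟩
  have hsys := FanTriangle.fanTri_fanSys (c := c) (FanTriangle.ThreeConn.good hM3 hcard) hcard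
    (not_or.2 ⟨hW, hWh⟩) he
    (by
      intro i hi h1 h2
      have h := htt i h1 h2
      rw [TriOrTriad, (hc i).2 hi] at h
      exact FanTriangle.isCircuit_iff'.1 h.1)
    (by
      intro i hi h1 h2
      have h := htt i h1 h2
      have hb : posBool b i = false := by
        rw [Bool.eq_false_iff, Ne, hc i]
        omega
      rw [TriOrTriad, hb] at h
      exact FanTriangle.isCircuit_iff'.1 h.1)
  obtain ⟨u, v, w, huv, huw, hvw, rfl⟩ := Set.encard_eq_three.1 hT.2
  obtain ⟨x, hx1, hx2, rfl⟩ := hTsub (show u ∈ ({u, v, w} : Set α) by simp)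
  obtain ⟨y, hy1, hy2, rfl⟩ := hTsub (show v ∈ ({e x, v, w} : Set α) by simp)
  obtain ⟨z, hz1, hz2, rfl⟩ := hTsub (show w ∈ ({e x, e y, w} : Set α) by simp)
  obtain ⟨i, h1, h2, h3, h4⟩ := hsys.consec (x := x) (y := y) (z := z)
    ⟨⟨⟨hx1, hx2⟩, ⟨hy1, hy2⟩, ⟨hz1, hz2⟩, fun h => huv (h ▸ rfl), fun h => huw (h ▸ rfl),
      fun h => hvw (h ▸ rfl)⟩, FanTriangle.isCircuit_iff'.1 hT.1⟩
  refine ⟨i, h1, h2, ?_, (hc i).2 h3⟩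
  have h5 : ({x, y, z} : Set ℕ) = {i, i + 1, i + 2} := Set.ext h4
  simpa only [Set.image_insert_eq, Set.image_singleton] using congrArg (e '' ·) h5
end
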